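/- Let K be a semidualizing R-module and let c_1 and c_2 be two G_K-Gorenstein ideals of R. Assume M_1, M, M_2 are R-modules such that M_1 is linked to M by c_1 and M is linked to M_2 by c_2. Then: (i) G_K-dim_R(M_1) = G_K-dim_R(M_2); (ii) if these dimensions are finite, then M_1 satisfies the condition S̃_k if and only if M_2 satisfies the condition S̃_k. -/

import Mathlib

open CategoryTheory

noncomputable section

universe u

/-- The `i`-th Ext group `Ext^i_R(M,N)`, as a type (with its `R`-module structure). -/
abbrev extM (R : Type u) [CommRing R] (i : ℕ) (M N : Type u) [AddCommGroup M] [Module R M]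
    [AddCommGroup N] [Module R N] : Type u :=
  ((Ext R (ModuleCat.{u} R) i).obj (Opposite.op (ModuleCat.of R M))).obj (ModuleCat.of R N)

/-- The `i`-th Tor group `Tor^R_i(M,N)`, as a type. -/
abbrev torM (R : Type u) [CommRing R] (i : ℕ) (M N : Type u) [AddCommGroup M] [Module R M]
    [AddCommGroup N] [Module R N] : Type u :=
  ((Tor (ModuleCat.{u} R) i).obj (ModuleCat.of R M)).obj (ModuleCat.of R N)

/-- The `i`-th local cohomology `H^i_I(M)`, as a type. -/
abbrev locCoh (R : Type u) [CommRing R] (I : Ideal R) (i : ℕ) (M : Type u) [AddCommGroup M]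
    [Module R M] : Type u :=
  (localCohomology I i).obj (ModuleCat.of R M)

/-- A submodule `N ≤ M` is superfluous if `K ⊔ N = ⊤` implies `K = ⊤`. -/
def Submodule.IsSuperfluous {R M : Type u} [CommRing R] [AddCommGroup M] [Module R M]
    (N : Submodule R M) : Prop :=
  ∀ K : Submodule R M, K ⊔ N = ⊤ → K = ⊤

/-- A minimal projective resolution of `M` by finitely generated projective modules:
each `P i → Ω^i M` is a projective cover (i.e. has superfluous kernel). -/
structure MinRes (R : Type u) [CommRing R] (M : Type u) [AddCommGroup M] [Module R M] where
  P : ℕ → ModuleCat.{u} R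
  projective : ∀ i, Module.Projective R (P i)
  finite : ∀ i, Module.Finite R (P i)
  d : (i : ℕ) → (↥(P (i + 1)) →ₗ[R] ↥(P i))
  ε : ↥(P 0) →ₗ[R] M
  surj : Function.Surjective ε
  exact0 : LinearMap.range (d 0) = LinearMap.ker ε
  exact : ∀ i, LinearMap.range (d (i + 1)) = LinearMap.ker (d i)
  min_eps : (LinearMap.ker ε).IsSuperfluous
  min_d : ∀ i, (LinearMap.ker (d i)).IsSuperfluous

namespace MinRes

variable {R M : Type u} [CommRing R] [AddCommGroup M] [Module R M]

/-- `T k F` is the Auslander-Bridger transpose `𝒯_{k+1} M = Tr Ω^k M`, computed as the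
cokernel of `P_k* → P_{k+1}*`. -/
def T (F : MinRes R M) (k : ℕ) : Type u :=
  (Module.Dual R ↥(F.P (k + 1))) ⧸ LinearMap.range (F.d k).dualMap

instance (F : MinRes R M) (k : ℕ) : AddCommGroup (F.T k) :=
  inferInstanceAs (AddCommGroup ((Module.Dual R ↥(F.P (k + 1))) ⧸
    LinearMap.range (F.d k).dualMap))

instance (F : MinRes R M) (k : ℕ) : Module R (F.T k) :=
  inferInstanceAs (Module R ((Module.Dual R ↥(F.P (k + 1))) ⧸
    LinearMap.range (F.d k).dualMap))

/-- The transpose `Tr M = coker(P₀* → P₁*)` computed from a minimal projective presentation. -/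
abbrev Tr (F : MinRes R M) : Type u := F.T 0

/-- `λM = ΩTr M`, realized as the image of `P₀* → P₁*` for a minimal projective
presentation `P₁ → P₀ → M → 0`. -/
def lambdaMod (F : MinRes R M) : Type u :=
  ↥(LinearMap.range (F.d 0).dualMap)

instance (F : MinRes R M) : AddCommGroup F.lambdaMod :=
  inferInstanceAs (AddCommGroup ↥(LinearMap.range (F.d 0).dualMap))

instance (F : MinRes R M) : Module R F.lambdaMod :=
  inferInstanceAs (Module R ↥(LinearMap.range (F.d 0).dualMap))

end MinRes

/-- `M` is a horizontally linked `R`-module, i.e. `M ≅ λλM`. -/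
def IsHorizontallyLinked (R : Type u) [CommRing R] (M : Type u) [AddCommGroup M]
    [Module R M] : Prop :=
  ∃ (F : MinRes R M) (G : MinRes R F.lambdaMod), Nonempty (G.lambdaMod ≃ₗ[R] M)

/-- `M` and `N` are horizontally linked to each other: `M ≅ λN` and `N ≅ λM`. -/
def MutuallyLinked (A : Type u) [CommRing A] (M N : Type u) [AddCommGroup M] [Module A M]
    [AddCommGroup N] [Module A N] : Prop :=
  ∃ (F : MinRes A M) (G : MinRes A N),
    Nonempty (F.lambdaMod ≃ₗ[A] N) ∧ Nonempty (G.lambdaMod ≃ₗ[A] M)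

/-- `M` is linked to `N` by the ideal `c`: `c` annihilates both modules and they are
horizontally linked to each other as `R ⧸ c`-modules. -/
def LinkedBy (R : Type u) [CommRing R] (c : Ideal R) (M N : Type u) [AddCommGroup M]
    [Module R M] [AddCommGroup N] [Module R N] : Prop :=
  ∃ (hM : Module.IsTorsionBySet R M c) (hN : Module.IsTorsionBySet R N c),
    letI := hM.module
    letI := hN.module
    MutuallyLinked (R ⧸ c) M N

/-- A stable module: no nonzero projective direct summand. -/
def IsStableModule (R : Type u) [CommRing R] (M : Type u) [AddCommGroup M] [Module R M] : Prop :=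
  ∀ N : Submodule R M, Module.Projective R ↥N → (∃ N' : Submodule R M, IsCompl N N') → N = ⊥

/-- `M` has G-dimension zero: `M` is finitely generated and reflexive,
and `Ext^i(M,R) = 0 = Ext^i(M*,R)` for all `i > 0`. -/
def IsGDimZero (R : Type u) [CommRing R] (M : Type u) [AddCommGroup M] [Module R M] : Prop :=
  Module.Finite R M ∧ Function.Bijective (Module.Dual.eval R M) ∧
    (∀ i : ℕ, 0 < i → Subsingleton (extM R i M R)) ∧
    (∀ i : ℕ, 0 < i → Subsingleton (extM R i (Module.Dual R M) R))

/-- `M` admits a resolution of length `≤ n` by modules of G-dimension zero. -/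
def GDimLE (R : Type u) [CommRing R] : ℕ → ModuleCat.{u} R → Prop
  | 0, M => IsGDimZero R ↥M
  | n + 1, M =>
    ∃ (G : ModuleCat.{u} R) (f : ↥G →ₗ[R] ↥M), IsGDimZero R ↥G ∧ Function.Surjective f ∧
      GDimLE R n (ModuleCat.of R ↥(LinearMap.ker f))

/-- The G-dimension of `M`: the minimal length of a resolution of `M` by modules of
G-dimension zero (`∞` if there is none). -/
def GDim (R : Type u) [CommRing R] (M : Type u) [AddCommGroup M] [Module R M] : ℕ∞ :=
  sInf {n : ℕ∞ | ∃ k : ℕ, n = k ∧ GDimLE R k (ModuleCat.of R M)}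

/-- The reduced grade of `M`: `rgr M = inf{ i > 0 | Ext^i(M,R) ≠ 0 }`. -/
def rgr (R : Type u) [CommRing R] (M : Type u) [AddCommGroup M] [Module R M] : ℕ∞ :=
  sInf {n : ℕ∞ | ∃ k : ℕ, n = k ∧ 0 < k ∧ ¬ Subsingleton (extM R k M R)}

/-- The grade of `M`: `gr M = inf{ i ≥ 0 | Ext^i(M,R) ≠ 0 }`. -/
def egrade (R : Type u) [CommRing R] (M : Type u) [AddCommGroup M] [Module R M] : ℕ∞ :=
  sInf {n : ℕ∞ | ∃ k : ℕ, n = k ∧ ¬ Subsingleton (extM R k M R)}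

/-- `depth_I(M) = inf{ i | Ext^i(R/I, M) ≠ 0 }`; for `I` the maximal ideal of a
local ring this is the depth of `M`. -/
def edepth (R : Type u) [CommRing R] (I : Ideal R) (M : Type u) [AddCommGroup M]
    [Module R M] : ℕ∞ :=
  sInf {n : ℕ∞ | ∃ k : ℕ, n = k ∧ ¬ Subsingleton (extM R k (R ⧸ I) M)}

/-- The depth of the local ring `R`. -/
def rdepth (R : Type u) [CommRing R] [IsLocalRing R] : ℕ∞ :=
  edepth R (IsLocalRing.maximalIdeal R) R

/-- `depth_{R_p}(M_p)`. -/
def locDepth (R : Type u) [CommRing R] (p : Ideal R) [p.IsPrime] (M : Type u) [AddCommGroup M]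
    [Module R M] : ℕ∞ :=
  edepth (Localization.AtPrime p) (IsLocalRing.maximalIdeal (Localization.AtPrime p))
    (LocalizedModule p.primeCompl M)

/-- `depth R_p`. -/
def locRingDepth (R : Type u) [CommRing R] (p : Ideal R) [p.IsPrime] : ℕ∞ :=
  rdepth (Localization.AtPrime p)

/-- `Gdim_{R_p}(M_p)`. -/
def locGDim (R : Type u) [CommRing R] (p : Ideal R) [p.IsPrime] (M : Type u) [AddCommGroup M]
    [Module R M] : ℕ∞ :=
  GDim (Localization.AtPrime p) (LocalizedModule p.primeCompl M)

/-- `rgr_{R_p}(M_p)`. -/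
def locRgr (R : Type u) [CommRing R] (p : Ideal R) [p.IsPrime] (M : Type u) [AddCommGroup M]
    [Module R M] : ℕ∞ :=
  rgr (Localization.AtPrime p) (LocalizedModule p.primeCompl M)

/-- `dim_{R_p}(M_p)`, the Krull dimension of the support of `M_p` over `R_p`. -/
def locDim (R : Type u) [CommRing R] (p : Ideal R) [p.IsPrime] (M : Type u) [AddCommGroup M]
    [Module R M] : WithBot ℕ∞ :=
  ringKrullDim ((Localization.AtPrime p) ⧸
    Module.annihilator (Localization.AtPrime p) (LocalizedModule p.primeCompl M))

/-- `M` satisfies the condition `S̃_k`: `depth_{R_p}(M_p) ≥ min{k, depth R_p}` for all primes. -/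
def Stilde (R : Type u) [CommRing R] (k : ℕ) (M : Type u) [AddCommGroup M] [Module R M] : Prop :=
  ∀ (p : Ideal R) (_ : p.IsPrime), min (k : ℕ∞) (locRingDepth R p) ≤ locDepth R p M

/-- `M` satisfies Serre's condition `(S_k)`:
`depth_{R_p}(M_p) ≥ min{k, dim_{R_p}(M_p)}` for all primes. -/
def SerreS (R : Type u) [CommRing R] (k : ℕ) (M : Type u) [AddCommGroup M] [Module R M] : Prop :=
  ∀ (p : Ideal R) (_ : p.IsPrime),
    min (k : WithBot ℕ∞) (locDim R p M) ≤ (locDepth R p M : WithBot ℕ∞)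

/-- `M` is a `k`-th syzygy module. -/
def IsKthSyzygy (R : Type u) [CommRing R] : ℕ → ModuleCat.{u} R → Prop
  | 0, _ => True
  | k + 1, M =>
    ∃ (P : ModuleCat.{u} R) (f : ↥M →ₗ[R] ↥P), Module.Projective R ↥P ∧ Module.Finite R ↥P ∧
      Function.Injective f ∧ IsKthSyzygy R k (ModuleCat.of R (↥P ⧸ LinearMap.range f))

/-- The `I`-torsion submodule `Γ_I(M) = { x | I^n x = 0 for some n }`. -/
def gammaTorsion (R : Type u) [CommRing R] (I : Ideal R) (M : Type u) [AddCommGroup M]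
    [Module R M] : Submodule R M where
  carrier := {x | ∃ n : ℕ, ∀ a ∈ I ^ n, a • x = 0}
  zero_mem' := ⟨0, fun a _ => smul_zero a⟩
  add_mem' := by
    rintro x y ⟨n, hn⟩ ⟨m, hm⟩
    exact ⟨n + m, fun a ha => by
      rw [smul_add, hn a (Ideal.pow_le_pow_right (Nat.le_add_right n m) ha),
        hm a (Ideal.pow_le_pow_right (Nat.le_add_left m n) ha), add_zero]⟩
  smul_mem' := by
    rintro c x ⟨n, hn⟩
    exact ⟨n, fun a ha => by rw [smul_comm, hn a ha, smul_zero]⟩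

/-- `N` has finite flat dimension (characterized by uniform vanishing of `Tor`). -/
def HasFiniteFlatDim (R : Type u) [CommRing R] (N : Type u) [AddCommGroup N] [Module R N] : Prop :=
  ∃ n : ℕ, ∀ i : ℕ, n < i → ∀ (M : ModuleCat.{u} R), Subsingleton (torM R i ↥M N)

/-- `N` has finite injective dimension (characterized by uniform vanishing of `Ext`). -/
def HasFiniteInjDim (R : Type u) [CommRing R] (N : Type u) [AddCommGroup N] [Module R N] : Prop :=
  ∃ n : ℕ, ∀ i : ℕ, n < i → ∀ (M : ModuleCat.{u} R), Subsingleton (extM R i ↥M N)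

/-- `K` is a semidualizing `R`-module. -/
def IsSemidualizing (R : Type u) [CommRing R] (K : Type u) [AddCommGroup K] [Module R K] : Prop :=
  Module.Finite R K ∧ Function.Bijective (LinearMap.lsmul R K) ∧
    ∀ i : ℕ, 0 < i → Subsingleton (extM R i K K)

/-- The biduality map `M → Hom(Hom(M,K),K)`. -/
def evalK (R : Type u) [CommRing R] (K M : Type u) [AddCommGroup K] [Module R K]
    [AddCommGroup M] [Module R M] : M →ₗ[R] ((M →ₗ[R] K) →ₗ[R] K) :=
  LinearMap.applyₗ

/-- `M` has `G_K`-dimension zero. -/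
def IsGKDimZero (R : Type u) [CommRing R] (K M : Type u) [AddCommGroup K] [Module R K]
    [AddCommGroup M] [Module R M] : Prop :=
  Module.Finite R M ∧ Function.Bijective (evalK R K M) ∧
    (∀ i : ℕ, 0 < i → Subsingleton (extM R i M K)) ∧
    (∀ i : ℕ, 0 < i → Subsingleton (extM R i (M →ₗ[R] K) K))

/-- `M` admits a resolution of length `≤ n` by modules of `G_K`-dimension zero. -/
def GKDimLE (R : Type u) [CommRing R] (K : Type u) [AddCommGroup K] [Module R K] :
    ℕ → ModuleCat.{u} R → Prop
  | 0, M => IsGKDimZero R K ↥M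
  | n + 1, M =>
    ∃ (G : ModuleCat.{u} R) (f : ↥G →ₗ[R] ↥M), IsGKDimZero R K ↥G ∧ Function.Surjective f ∧
      GKDimLE R K n (ModuleCat.of R ↥(LinearMap.ker f))

/-- The `G_K`-dimension of `M`. -/
def GKDim (R : Type u) [CommRing R] (K M : Type u) [AddCommGroup K] [Module R K]
    [AddCommGroup M] [Module R M] : ℕ∞ :=
  sInf {n : ℕ∞ | ∃ k : ℕ, n = k ∧ GKDimLE R K k (ModuleCat.of R M)}

/-- The grade of a module, `gr_R(M) = grade(Ann_R(M), R) = inf{i | Ext^i(R/Ann M, R) ≠ 0}`. -/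
def grAnn (R : Type u) [CommRing R] (M : Type u) [AddCommGroup M] [Module R M] : ℕ∞ :=
  egrade R (R ⧸ Module.annihilator R M)

/-- The grade of an ideal, `grade(I) = inf{i | Ext^i(R/I, R) ≠ 0}`. -/
def gradeI (R : Type u) [CommRing R] (I : Ideal R) : ℕ∞ :=
  egrade R (R ⧸ I)

/-- The ideal `I` is `G_K`-Gorenstein: `R/I` is `G_K`-perfect and `Ext^{gr I}(R/I, K)` is
cyclic. -/
def IsGKGorensteinIdeal (R : Type u) [CommRing R] (K : Type u) [AddCommGroup K] [Module R K]
    (I : Ideal R) : Prop :=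
  ∃ n : ℕ, grAnn R (R ⧸ I) = (n : ℕ∞) ∧ GKDim R K (R ⧸ I) = (n : ℕ∞) ∧
    ∃ x : extM R n (R ⧸ I) K, Submodule.span R {x} = ⊤

end

/-!
If `c` is a `G_K`-Gorenstein ideal of grade `n`, then `Ext^n_R(R/c, K) ≅ R/c`, so the functors
`Hom_{R/c}(-, R/c)` and `Ext^n_R(-, K)` agree on `R/c`-modules. Hence for modules `M` and `N`
linked by `c` and a free cover `P → M` over `R/c` there is an exact sequence
`0 → Ext^n_R(M, K) → Ext^n_R(P, K) → N → 0` whose middle term, a free `R/c`-module, has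
`G_K`-dimension `n`. If `M ≠ 0`, then `c₁` and `c₂` have the same grade `n`, and `M₁` and `M₂` are
the cokernels of two such sequences with the same first term `Ext^n_R(M, K)`.

(i) If `G_K-dim M₁ > n`, then it is determined by `G_K-dim Ext^n_R(M, K)`, which in turn bounds
`G_K-dim M₂`. If `G_K-dim M₁ = n`, then `M₁` is `G_K`-perfect, a property that passes to `M` and
then to `M₂` because `Ext^n_R(-, K)` is a duality on `G_K`-perfect modules of grade `n`.

(ii) If `n > 0`, then `M₁` and `M₂` are killed by regular elements, so for `k > 0` they satisfy
`S̃_k` only if they vanish. If `n = 0`, localize at a prime `p`: the two sequences transfer every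
bound `d < depth R_p` on the depth from `M₁` to `M₂`, and for `d = depth R_p` the
Auslander–Bridger formula says that the localization of `M₁`, hence that of `M₂`, has
`G_K`-dimension zero.
-/

universe u

section ExtComparison

variable {R : Type u} [CommRing R] {X : ModuleCat.{u} R} (P : ProjectiveResolution X)
  (Y : ModuleCat.{u} R)

variable {Y} in
lemma extMk_degree_zero_eq_zero_iff (f : P.complex.X 0 ⟶ Y) (hf : P.complex.d 1 0 ≫ f = 0) :
    P.extMk f 1 rfl hf = 0 ↔ f = 0 := by
  refine ⟨fun h ↦ ?_, fun h ↦ by simp [h]⟩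
  have d_zero : P.cochainComplex.d (-((0 : ℕ) : ℤ)) 1 = 0 :=
    (P.cochainComplex.isZero_of_isStrictlyLE 0 1).eq_of_tgt _ _
  simp only [← P.extEquivCohomologyClass.apply_eq_iff_eq,
    ProjectiveResolution.extEquivCohomologyClass_extMk,
    ProjectiveResolution.extEquivCohomologyClass_zero,
    CochainComplex.HomComplex.CohomologyClass.mk_eq_zero_iff] at h
  rw [CochainComplex.HomComplex.Cocycle.toSingleMk_mem_coboundaries_iff _ _ _ _ _ 1 (by simp)] at h
  obtain ⟨g, hg⟩ := h
  rw [d_zero, Limits.zero_comp] at hg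
  rw [← cancel_epi (P.cochainComplexXIso (-((0 : ℕ) : ℤ)) 0 rfl).hom, ← hg]
  simp

/-- The class in `Abelian.Ext X Y n` of an `n`-cocycle of the complex `Hom(P, Y)`, where `P` is a
projective resolution of `X`. -/
noncomputable def extClassOfCocycle (n : ℕ) :
    LinearMap.ker ((P.complex.linearYonedaObj R Y).d n (n + 1)).hom →ₗ[R] Abelian.Ext X Y n where
  toFun f := P.extMk f.1 (n + 1) rfl f.2
  map_add' _ _ := (P.add_extMk ..).symm
  map_smul' r f := by
    refine .symm ((Abelian.Ext.smul_eq_comp_mk₀ _ r).trans ?_)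
    exact (P.extMk_comp_mk₀ _ _ rfl f.2 _).trans (by congr 1)

lemma extClassOfCocycle_surjective (n : ℕ) : Function.Surjective (extClassOfCocycle P Y n) :=
  fun w ↦ by
    obtain ⟨f, hf, rfl⟩ := P.extMk_surjective w (n + 1) rfl
    exact ⟨⟨f, hf⟩, rfl⟩

lemma extClassOfCocycle_eq_zero_iff (n : ℕ)
    (f : LinearMap.ker ((P.complex.linearYonedaObj R Y).d n (n + 1)).hom) :
    extClassOfCocycle P Y n f = 0 ↔
      ∃ g, ((P.complex.linearYonedaObj R Y).d ((ComplexShape.up ℕ).prev n) n).hom g = f.1 := by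
  cases n with
  | zero =>
    have d_zero : (P.complex.linearYonedaObj R Y).d ((ComplexShape.up ℕ).prev 0) 0 = 0 :=
      (P.complex.linearYonedaObj R Y).shape _ _ (by simp)
    refine (extMk_degree_zero_eq_zero_iff P f.1 f.2).trans ?_
    rw [d_zero]
    exact ⟨fun h ↦ ⟨0, h.symm⟩, fun ⟨_, h⟩ ↦ h.symm⟩
  | succ n =>
    rw [CochainComplex.prev_nat_succ]
    exact P.extMk_eq_zero_iff f.1 (n + 2) rfl f.2 n rfl

lemma nonempty_ext_linearEquiv_abelianExt (X Y : ModuleCat.{u} R) (n : ℕ) :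
    Nonempty (((Ext R (ModuleCat.{u} R) n).obj (Opposite.op X)).obj Y ≃ₗ[R]
      Abelian.Ext X Y n) := by
  let P := ProjectiveResolution.of X
  let C := P.complex.linearYonedaObj R Y
  let S := C.sc' ((ComplexShape.up ℕ).prev n) n (n + 1)
  let homologyIso := P.isoExt (R := R) n Y ≪≫
    C.homologyIsoSc' _ n (n + 1) rfl (by simp) ≪≫ S.moduleCatHomologyIso
  let classMap : LinearMap.ker S.g.hom →ₗ[R] Abelian.Ext X Y n := extClassOfCocycle P Y n
  have range_eq : LinearMap.range S.moduleCatToCycles = LinearMap.ker classMap :=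
    Submodule.ext fun f ↦ .trans (exists_congr fun _ ↦ Subtype.ext_iff)
      (extClassOfCocycle_eq_zero_iff P Y n f).symm
  exact ⟨homologyIso.toLinearEquiv ≪≫ₗ Submodule.quotEquivOfEq _ _ range_eq ≪≫ₗ
    classMap.quotKerEquivOfSurjective (extClassOfCocycle_surjective P Y n)⟩

end ExtComparison

/-- `Ext^i_R(M, N)` in the form of `Abelian.Ext`, for unbundled modules. Unlike the derived-functor
model `extM`, it comes with the Yoneda product and both long exact sequences. -/
abbrev ModExt (R : Type u) [CommRing R] (i : ℕ) (M N : Type u) [AddCommGroup M] [Module R M]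
    [AddCommGroup N] [Module R N] : Type u :=
  Abelian.Ext (ModuleCat.of R M) (ModuleCat.of R N) i

namespace ModExt

variable {R : Type u} [CommRing R] {L M N X : Type u} [AddCommGroup L] [Module R L]
  [AddCommGroup M] [Module R M] [AddCommGroup N] [Module R N] [AddCommGroup X] [Module R X]

lemma nonempty_extM_linearEquiv (i : ℕ) (M N : Type u) [AddCommGroup M] [Module R M]
    [AddCommGroup N] [Module R N] : Nonempty (extM R i M N ≃ₗ[R] ModExt R i M N) :=
  nonempty_ext_linearEquiv_abelianExt _ _ i

lemma subsingleton_extM_iff {i : ℕ} :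
    Subsingleton (extM R i M N) ↔ Subsingleton (ModExt R i M N) :=
  (nonempty_extM_linearEquiv i M N).some.toEquiv.subsingleton_congr

/-- The identification `Ext^0_R(M, N) = Hom_R(M, N)`. -/
noncomputable def homEquiv (M N : Type u) [AddCommGroup M] [Module R M] [AddCommGroup N]
    [Module R N] : ModExt R 0 M N ≃ₗ[R] (M →ₗ[R] N) :=
  Abelian.Ext.linearEquiv₀ (R := R) ≪≫ₗ ModuleCat.homLinearEquiv

lemma homEquiv_symm_apply (f : M →ₗ[R] N) :
    (homEquiv M N).symm f = Abelian.Ext.mk₀ (ModuleCat.ofHom f) := rfl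

/-- Contravariant functoriality of `Ext^i_R(-, N)`, linear in the homomorphism as well. -/
noncomputable def precomp (i : ℕ) (N : Type u) [AddCommGroup N] [Module R N] :
    (L →ₗ[R] M) →ₗ[R] ModExt R i M N →ₗ[R] ModExt R i L N :=
  Abelian.Ext.bilinearCompOfLinear R (ModuleCat.of R L) (ModuleCat.of R M) (ModuleCat.of R N)
    0 i i (zero_add i) ∘ₗ (homEquiv L M).symm.toLinearMap

/-- Covariant functoriality of `Ext^i_R(X, -)`, linear in the homomorphism as well. -/
noncomputable def postcomp (i : ℕ) (X : Type u) [AddCommGroup X] [Module R X] :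
    (M →ₗ[R] N) →ₗ[R] ModExt R i X M →ₗ[R] ModExt R i X N :=
  (Abelian.Ext.bilinearCompOfLinear R (ModuleCat.of R X) (ModuleCat.of R M) (ModuleCat.of R N)
    i 0 i (add_zero i)).flip ∘ₗ (homEquiv M N).symm.toLinearMap

lemma precomp_apply (i : ℕ) (f : L →ₗ[R] M) (x : ModExt R i M N) :
    precomp i N f x = (Abelian.Ext.mk₀ (ModuleCat.ofHom f)).comp x (zero_add i) := rfl

lemma postcomp_apply (i : ℕ) (f : M →ₗ[R] N) (x : ModExt R i X M) :
    postcomp i X f x = x.comp (Abelian.Ext.mk₀ (ModuleCat.ofHom f)) (add_zero i) := rfl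

lemma precomp_comp (i : ℕ) (f : L →ₗ[R] M) (g : M →ₗ[R] N) (x : ModExt R i N X) :
    precomp i X (g ∘ₗ f) x = precomp i X f (precomp i X g x) := by
  simp only [precomp_apply, ModuleCat.ofHom_comp, Abelian.Ext.mk₀_comp_mk₀_assoc]

lemma postcomp_comp (i : ℕ) (f : L →ₗ[R] M) (g : M →ₗ[R] N) (x : ModExt R i X L) :
    postcomp i X (g ∘ₗ f) x = postcomp i X g (postcomp i X f x) := by
  simp [postcomp_apply, ModuleCat.ofHom_comp, ← Abelian.Ext.mk₀_comp_mk₀]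

lemma precomp_id (i : ℕ) (x : ModExt R i M N) : precomp i N LinearMap.id x = x := by
  simp [precomp_apply]

lemma postcomp_id (i : ℕ) (x : ModExt R i M N) : postcomp i M LinearMap.id x = x := by
  simp [postcomp_apply]

lemma homEquiv_precomp (f : L →ₗ[R] M) (x : ModExt R 0 M N) :
    homEquiv L N (precomp 0 N f x) = homEquiv M N x ∘ₗ f := by
  obtain ⟨g, rfl⟩ := (homEquiv M N).symm.surjective x
  rw [← LinearEquiv.eq_symm_apply, LinearEquiv.apply_symm_apply]
  simp only [homEquiv_symm_apply, precomp_apply, Abelian.Ext.mk₀_comp_mk₀, ModuleCat.ofHom_comp]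

lemma homEquiv_postcomp (f : M →ₗ[R] N) (x : ModExt R 0 X M) :
    homEquiv X N (postcomp 0 X f x) = f ∘ₗ homEquiv X M x := by
  obtain ⟨g, rfl⟩ := (homEquiv X M).symm.surjective x
  rw [← LinearEquiv.eq_symm_apply, LinearEquiv.apply_symm_apply]
  simp only [homEquiv_symm_apply, postcomp_apply, Abelian.Ext.mk₀_comp_mk₀, ModuleCat.ofHom_comp]

/-- Invariance of `Ext^i_R(-, N)` under isomorphism. -/
noncomputable def congrLeft (i : ℕ) (N : Type u) [AddCommGroup N] [Module R N] (e : L ≃ₗ[R] M) :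
    ModExt R i M N ≃ₗ[R] ModExt R i L N :=
  LinearEquiv.ofLinearMap (precomp i N e.toLinearMap) (precomp i N e.symm.toLinearMap)
    (by ext x; simp [← precomp_comp, precomp_id])
    (by ext x; simp [← precomp_comp, precomp_id])

lemma subsingleton_of_projective (i : ℕ) (P N : Type u) [AddCommGroup P] [Module R P]
    [Module.Projective R P] [AddCommGroup N] [Module R N] : Subsingleton (ModExt R (i + 1) P N) :=
  have : Projective (ModuleCat.of R P) := (IsProjective.iff_projective P).1 inferInstance
  subsingleton_of_forall_eq 0 fun x ↦ Abelian.Ext.eq_zero_of_projective x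

lemma subsingleton_of_subsingleton_left (i : ℕ) [Subsingleton M] :
    Subsingleton (ModExt R i M N) :=
  subsingleton_of_forall_eq 0 fun x ↦ by
    rw [← precomp_id i x, Subsingleton.elim (LinearMap.id : M →ₗ[R] M) 0, map_zero,
      LinearMap.zero_apply]

lemma subsingleton_of_subsingleton_right (i : ℕ) [Subsingleton N] :
    Subsingleton (ModExt R i M N) :=
  subsingleton_of_forall_eq 0 fun x ↦ by
    rw [← postcomp_id i x, Subsingleton.elim (LinearMap.id : N →ₗ[R] N) 0, map_zero,
      LinearMap.zero_apply]

lemma sum_single_comp_proj (a : ℕ) :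
    ∑ k : Fin a, LinearMap.single R (fun _ ↦ M) k ∘ₗ LinearMap.proj k = LinearMap.id := by
  ext k x l
  simp [Pi.single_apply]

lemma sum_postcomp_single_proj (i : ℕ) {a : ℕ} (x : ModExt R i X (Fin a → M)) :
    ∑ k, postcomp i X (LinearMap.single R (fun _ ↦ M) k)
      (postcomp i X (LinearMap.proj k : (Fin a → M) →ₗ[R] M) x) = x := by
  simp only [← postcomp_comp]
  rw [← LinearMap.sum_apply, ← map_sum, sum_single_comp_proj, postcomp_id]

lemma sum_precomp_proj_single (i : ℕ) {a : ℕ} (x : ModExt R i (Fin a → M) X) :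
    ∑ k, precomp i X (LinearMap.proj k : (Fin a → M) →ₗ[R] M)
      (precomp i X (LinearMap.single R (fun _ ↦ M) k) x) = x := by
  simp only [← precomp_comp]
  rw [← LinearMap.sum_apply, ← map_sum, sum_single_comp_proj, precomp_id]

lemma subsingleton_pi_right {i : ℕ} (a : ℕ) (h : Subsingleton (ModExt R i X M)) :
    Subsingleton (ModExt R i X (Fin a → M)) :=
  subsingleton_of_forall_eq 0 fun x ↦ by
    rw [← sum_postcomp_single_proj i x]
    exact Finset.sum_eq_zero fun k _ ↦ by rw [Subsingleton.elim (postcomp i X _ x) 0, map_zero]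

lemma subsingleton_pi_left {i : ℕ} (a : ℕ) (h : Subsingleton (ModExt R i M X)) :
    Subsingleton (ModExt R i (Fin a → M) X) :=
  subsingleton_of_forall_eq 0 fun x ↦ by
    rw [← sum_precomp_proj_single i x]
    exact Finset.sum_eq_zero fun k _ ↦ by rw [Subsingleton.elim (precomp i X _ x) 0, map_zero]

end ModExt

/-- The sequence `0 → L → M → N → 0` of linear maps `f : L → M` and `g : M → N` is exact. -/
structure IsShortExact {R L M N : Type*} [CommRing R] [AddCommGroup L] [Module R L]
    [AddCommGroup M] [Module R M] [AddCommGroup N] [Module R N] (f : L →ₗ[R] M)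
    (g : M →ₗ[R] N) : Prop where
  injective : Function.Injective f
  surjective : Function.Surjective g
  exact : Function.Exact f g

/-- The fibre product `M ×_N M'` of `g : M → N` and `g' : M' → N`. -/
def fiberProduct {R M M' N : Type*} [CommRing R] [AddCommGroup M] [Module R M]
    [AddCommGroup M'] [Module R M'] [AddCommGroup N] [Module R N] (g : M →ₗ[R] N)
    (g' : M' →ₗ[R] N) : Submodule R (M × M') :=
  LinearMap.eqLocus (g ∘ₗ LinearMap.fst R M M') (g' ∘ₗ LinearMap.snd R M M')

lemma subsingleton_of_exact {R L M N : Type*} [CommRing R] [AddCommGroup L] [Module R L]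
    [AddCommGroup M] [Module R M] [AddCommGroup N] [Module R N] {f : L →ₗ[R] M} {g : M →ₗ[R] N}
    (h : Function.Exact f g) (_ : Subsingleton L) (_ : Subsingleton N) : Subsingleton M :=
  subsingleton_of_forall_eq 0 fun x ↦ by
    obtain ⟨y, rfl⟩ := (h x).1 (Subsingleton.elim _ _)
    rw [Subsingleton.elim y 0, map_zero]

namespace IsShortExact

section Constructions

variable {R L M N L' M' : Type*} [CommRing R] [AddCommGroup L] [Module R L] [AddCommGroup M]
  [Module R M] [AddCommGroup N] [Module R N] [AddCommGroup L'] [Module R L'] [AddCommGroup M']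
  [Module R M'] {f : L →ₗ[R] M} {g : M →ₗ[R] N}

lemma ker_subtype (hg : Function.Surjective g) : IsShortExact (LinearMap.ker g).subtype g :=
  ⟨Submodule.subtype_injective _, hg, LinearMap.exact_subtype_ker_map g⟩

lemma inl_snd : IsShortExact (LinearMap.inl R L N) (LinearMap.snd R L N) :=
  ⟨LinearMap.inl_injective, LinearMap.snd_surjective, Function.Exact.inl_snd⟩

/-- The first term of a short exact sequence is the kernel of the second map. -/
noncomputable def kerEquiv (h : IsShortExact f g) : L ≃ₗ[R] LinearMap.ker g :=
  LinearEquiv.ofInjective f h.injective ≪≫ₗ LinearEquiv.ofEq _ _ h.exact.linearMap_ker_eq.symm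

lemma of_ladder_linearEquiv (h : IsShortExact f g) (e : L ≃ₗ[R] L') (e' : M ≃ₗ[R] M')
    {f' : L' →ₗ[R] M'} (hf : f' ∘ₗ e.toLinearMap = e'.toLinearMap ∘ₗ f) :
    IsShortExact f' (g ∘ₗ e'.symm.toLinearMap) := by
  rw [(LinearEquiv.eq_comp_toLinearMap_symm f' (e'.toLinearMap ∘ₗ f)).2 hf]
  exact ⟨(e'.injective.comp h.injective).comp e.symm.injective,
    h.surjective.comp e'.symm.surjective,
    LinearEquiv.precomp_exact_iff_exact.2 ((LinearEquiv.conj_exact_iff_exact f g e').2 h.exact)⟩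

lemma fiberProduct_fst {f' : L' →ₗ[R] M'} {g' : M' →ₗ[R] N} (h' : IsShortExact f' g')
    (g : M →ₗ[R] N) :
    IsShortExact
      ((LinearMap.inr R M M' ∘ₗ f').codRestrict (fiberProduct g g')
        fun x ↦ (map_zero g).trans (h'.exact.apply_apply_eq_zero x).symm)
      (LinearMap.fst R M M' ∘ₗ (fiberProduct g g').subtype) where
  injective _ _ hxy := h'.injective (congrArg (fun w : fiberProduct g g' ↦ w.1.2) hxy)
  surjective x :=
    have ⟨y, hy⟩ := h'.surjective (g x)
    ⟨⟨(x, y), hy.symm⟩, rfl⟩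
  exact := by
    rintro ⟨⟨x, y⟩, hxy : g x = g' y⟩
    refine ⟨fun (hx : x = 0) ↦ ?_, ?_⟩
    · obtain ⟨z, rfl⟩ := (h'.exact y).1 (by rw [← hxy, hx, map_zero])
      exact ⟨z, Subtype.ext (Prod.ext hx.symm rfl)⟩
    · rintro ⟨z, hz⟩
      exact (congrArg (fun w : fiberProduct g g' ↦ w.1.1) hz).symm

lemma fiberProduct_snd (h : IsShortExact f g) (g' : M' →ₗ[R] N) :
    IsShortExact
      ((LinearMap.inl R M M' ∘ₗ f).codRestrict (fiberProduct g g')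
        fun x ↦ (h.exact.apply_apply_eq_zero x).trans (map_zero g').symm)
      (LinearMap.snd R M M' ∘ₗ (fiberProduct g g').subtype) where
  injective _ _ hxy := h.injective (congrArg (fun w : fiberProduct g g' ↦ w.1.1) hxy)
  surjective y :=
    have ⟨x, hx⟩ := h.surjective (g' y)
    ⟨⟨(x, y), hx⟩, rfl⟩
  exact := by
    rintro ⟨⟨x, y⟩, hxy : g x = g' y⟩
    refine ⟨fun (hy : y = 0) ↦ ?_, ?_⟩
    · obtain ⟨z, rfl⟩ := (h.exact x).1 (by rw [hxy, hy, map_zero])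
      exact ⟨z, Subtype.ext (Prod.ext rfl hy.symm)⟩
    · rintro ⟨z, hz⟩
      exact (congrArg (fun w : fiberProduct g g' ↦ w.1.2) hz).symm

lemma ker_comp {p : L →ₗ[R] M} (hp : Function.Surjective p) (g : M →ₗ[R] N) :
    IsShortExact (Submodule.inclusion (p.ker_le_ker_comp g))
      (p.restrict fun _ hx ↦ hx : LinearMap.ker (g ∘ₗ p) →ₗ[R] LinearMap.ker g) where
  injective := Submodule.inclusion_injective _
  surjective y :=
    have ⟨x, hx⟩ := hp y
    ⟨⟨x, (congrArg g hx).trans y.2⟩, Subtype.ext hx⟩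
  exact x :=
    ⟨fun hx ↦ ⟨⟨x, congrArg Subtype.val hx⟩, rfl⟩, by
      rintro ⟨y, rfl⟩
      exact Subtype.ext y.2⟩

lemma lcomp_exact (h : IsShortExact f g) (X : Type*) [AddCommGroup X] [Module R X] :
    Function.Exact (g.lcomp R X) (f.lcomp R X) :=
  LinearMap.exact_lcomp_of_exact_of_surjective X h.exact h.surjective

lemma lcomp_injective (h : IsShortExact f g) (X : Type*) [AddCommGroup X] [Module R X] :
    Function.Injective (g.lcomp R X) :=
  LinearMap.lcomp_injective_of_surjective g h.surjective

end Constructions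

section LongExactSequences

variable {R : Type u} [CommRing R] {L M N : Type u} [AddCommGroup L] [Module R L]
  [AddCommGroup M] [Module R M] [AddCommGroup N] [Module R N] {f : L →ₗ[R] M} {g : M →ₗ[R] N}
  (h : IsShortExact f g) (i : ℕ) (X : Type u) [AddCommGroup X] [Module R X]

open ModExt

include h in
lemma shortExact :
    (ShortComplex.mk (ModuleCat.ofHom f) (ModuleCat.ofHom g)
      (by ext x; exact h.exact.apply_apply_eq_zero x)).ShortExact :=
  ModuleCat.shortComplex_shortExact _ h.exact h.injective h.surjective

/-- The connecting homomorphism of the long exact sequence of `Ext_R(-, X)`. -/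
noncomputable def connectingSource : ModExt R i L X →ₗ[R] ModExt R (i + 1) N X :=
  Abelian.Ext.precompOfLinear h.shortExact.extClass R _ (add_comm 1 i)

/-- The connecting homomorphism of the long exact sequence of `Ext_R(X, -)`. -/
noncomputable def connectingTarget : ModExt R i X N →ₗ[R] ModExt R (i + 1) X L :=
  Abelian.Ext.postcompOfLinear h.shortExact.extClass R _ rfl

lemma connectingTarget_apply (x : ModExt R i X N) :
    h.connectingTarget i X x = x.comp h.shortExact.extClass rfl := rfl

include h in
lemma precomp_exact : Function.Exact (precomp i X g) (precomp i X f) := by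
  refine fun x ↦ ⟨Abelian.Ext.contravariant_sequence_exact₂ h.shortExact _ x, ?_⟩
  rintro ⟨y, rfl⟩
  rw [← precomp_comp, h.exact.linearMap_comp_eq_zero, map_zero, LinearMap.zero_apply]

include h in
lemma postcomp_exact : Function.Exact (postcomp i X f) (postcomp i X g) := by
  refine fun x ↦ ⟨Abelian.Ext.covariant_sequence_exact₂ _ h.shortExact x, ?_⟩
  rintro ⟨y, rfl⟩
  rw [← postcomp_comp, h.exact.linearMap_comp_eq_zero, map_zero, LinearMap.zero_apply]

lemma precomp_connectingSource_exact :
    Function.Exact (precomp i X f) (h.connectingSource i X) := by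
  refine fun x ↦
    ⟨Abelian.Ext.contravariant_sequence_exact₁ h.shortExact _ x (add_comm 1 i), ?_⟩
  rintro ⟨y, rfl⟩
  exact h.shortExact.extClass_comp_assoc y (h := add_comm 1 i)

lemma connectingSource_precomp_exact :
    Function.Exact (h.connectingSource i X) (precomp (i + 1) X g) := by
  refine fun x ↦
    ⟨fun hx ↦ Abelian.Ext.contravariant_sequence_exact₃ h.shortExact _ x hx (add_comm 1 i), ?_⟩
  rintro ⟨y, rfl⟩
  exact h.shortExact.comp_extClass_assoc y (add_comm 1 i)

lemma postcomp_connectingTarget_exact :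
    Function.Exact (postcomp i X g) (h.connectingTarget i X) := by
  refine fun x ↦ ⟨Abelian.Ext.covariant_sequence_exact₃ _ h.shortExact x rfl, ?_⟩
  rintro ⟨y, rfl⟩
  simp [postcomp_apply, connectingTarget_apply, h.shortExact.comp_extClass]

lemma connectingTarget_postcomp_exact :
    Function.Exact (h.connectingTarget i X) (postcomp (i + 1) X f) := by
  refine fun x ↦
    ⟨fun hx ↦ Abelian.Ext.covariant_sequence_exact₁ _ h.shortExact x hx rfl, ?_⟩
  rintro ⟨y, rfl⟩
  simp [postcomp_apply, connectingTarget_apply, h.shortExact.extClass_comp]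

end LongExactSequences

section Vanishing

variable {R : Type u} [CommRing R] {L M N X : Type u} [AddCommGroup L] [Module R L]
  [AddCommGroup M] [Module R M] [AddCommGroup N] [Module R N] [AddCommGroup X] [Module R X]
  {f : L →ₗ[R] M} {g : M →ₗ[R] N} (h : IsShortExact f g) {i : ℕ}

open ModExt

include h

lemma subsingleton_ext_middle_source (hL : Subsingleton (ModExt R i L X))
    (hN : Subsingleton (ModExt R i N X)) : Subsingleton (ModExt R i M X) :=
  subsingleton_of_exact (h.precomp_exact i X) hN hL

lemma subsingleton_ext_left_source (hM : Subsingleton (ModExt R i M X))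
    (hN : Subsingleton (ModExt R (i + 1) N X)) : Subsingleton (ModExt R i L X) :=
  subsingleton_of_exact (h.precomp_connectingSource_exact i X) hM hN

lemma subsingleton_ext_right_source (hL : Subsingleton (ModExt R i L X))
    (hM : Subsingleton (ModExt R (i + 1) M X)) : Subsingleton (ModExt R (i + 1) N X) :=
  subsingleton_of_exact (h.connectingSource_precomp_exact i X) hL hM

lemma subsingleton_ext_left_target (hM : Subsingleton (ModExt R (i + 1) X M))
    (hN : Subsingleton (ModExt R i X N)) : Subsingleton (ModExt R (i + 1) X L) :=
  subsingleton_of_exact (h.connectingTarget_postcomp_exact i X) hN hM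

lemma subsingleton_ext_right_target (hL : Subsingleton (ModExt R (i + 1) X L))
    (hM : Subsingleton (ModExt R i X M)) : Subsingleton (ModExt R i X N) :=
  subsingleton_of_exact (h.postcomp_connectingTarget_exact i X) hM hL

end Vanishing

section Dual

variable {R : Type u} [CommRing R] {L M N : Type u} [AddCommGroup L] [Module R L]
  [AddCommGroup M] [Module R M] [AddCommGroup N] [Module R N] {f : L →ₗ[R] M} {g : M →ₗ[R] N}
  (h : IsShortExact f g) (K : Type u) [AddCommGroup K] [Module R K]

open ModExt

/-- The connecting homomorphism `Hom_R(L, K) → Ext^1_R(N, K)`. -/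
noncomputable def homConnecting : (L →ₗ[R] K) →ₗ[R] ModExt R 1 N K :=
  h.connectingSource 0 K ∘ₗ (homEquiv L K).symm.toLinearMap

lemma lcomp_homConnecting_exact : Function.Exact (f.lcomp R K) (h.homConnecting K) := by
  refine (h.precomp_connectingSource_exact 0 K).of_ladder_linearEquiv_of_exact
    (e₁ := homEquiv M K) (e₂ := homEquiv L K) (e₃ := LinearEquiv.refl R _) ?_ ?_
  · ext1 x
    exact (homEquiv_precomp f x).symm
  · ext1 x
    exact congrArg (h.connectingSource 0 K) ((homEquiv L K).symm_apply_apply x)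

lemma homConnecting_precomp_exact : Function.Exact (h.homConnecting K) (precomp 1 K g) :=
  LinearEquiv.precomp_exact_iff_exact.2 (h.connectingSource_precomp_exact 0 K)

lemma homConnecting_surjective (_ : Subsingleton (ModExt R 1 M K)) :
    Function.Surjective (h.homConnecting K) :=
  fun x ↦ (h.homConnecting_precomp_exact K x).1 (Subsingleton.elim _ _)

include h

variable {K}

lemma lcomp_surjective (_ : Subsingleton (ModExt R 1 N K)) :
    Function.Surjective (f.lcomp R K) := fun φ ↦
  (h.lcomp_homConnecting_exact K φ).1 (Subsingleton.elim _ _)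

lemma dual (hN : Subsingleton (ModExt R 1 N K)) : IsShortExact (g.lcomp R K) (f.lcomp R K) :=
  ⟨h.lcomp_injective K, h.lcomp_surjective hN, h.lcomp_exact K⟩

lemma subsingleton_ext_one_of_lcomp_surjective (hM : Subsingleton (ModExt R 1 M K))
    (hf : Function.Surjective (f.lcomp R K)) : Subsingleton (ModExt R 1 N K) :=
  subsingleton_of_forall_eq 0 fun x ↦ by
    obtain ⟨φ, rfl⟩ := h.homConnecting_surjective K hM x
    exact (h.lcomp_homConnecting_exact K φ).2 (hf φ)

end Dual

end IsShortExact

lemma exists_isShortExact_free (R : Type u) [CommRing R] (X : Type u) [AddCommGroup X]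
    [Module R X] [Module.Finite R X] :
    ∃ (n : ℕ) (L : Type u) (_ : AddCommGroup L) (_ : Module R L) (i : L →ₗ[R] (Fin n → R))
      (p : (Fin n → R) →ₗ[R] X), IsShortExact i p := by
  obtain ⟨n, p, hp⟩ := Module.Finite.exists_fin' R X
  exact ⟨n, LinearMap.ker p, inferInstance, inferInstance, _, p, .ker_subtype hp⟩

namespace IsShortExact

variable {R : Type*} [CommRing R] {L M N L' M' N' : Type*} [AddCommGroup L] [Module R L]
  [AddCommGroup M] [Module R M] [AddCommGroup N] [Module R N] [AddCommGroup L'] [Module R L']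
  [AddCommGroup M'] [Module R M'] [AddCommGroup N'] [Module R N'] {f : L →ₗ[R] M}
  {g : M →ₗ[R] N} {f' : L' →ₗ[R] M'} {g' : M' →ₗ[R] N'}

lemma bijective_middle (h : IsShortExact f g) (h' : IsShortExact f' g') {i : L →ₗ[R] L'}
    {j : M →ₗ[R] M'} {k : N →ₗ[R] N'} (hij : f' ∘ₗ i = j ∘ₗ f) (hjk : g' ∘ₗ j = k ∘ₗ g)
    (hi : Function.Bijective i) (hk : Function.Bijective k) : Function.Bijective j :=
  LinearMap.bijective_of_surjective_of_bijective_of_bijective_of_injective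
    (0 : PUnit →ₗ[R] L) f g (0 : N →ₗ[R] PUnit) (0 : PUnit →ₗ[R] L') f' g' (0 : N' →ₗ[R] PUnit)
    LinearMap.id i j k LinearMap.id (by simp) hij hjk (by simp)
    ((LinearMap.exact_zero_iff_injective _ _).2 h.injective) h.exact
    ((LinearMap.exact_zero_iff_surjective _ _).2 h.surjective)
    ((LinearMap.exact_zero_iff_injective _ _).2 h'.injective) h'.exact
    ((LinearMap.exact_zero_iff_surjective _ _).2 h'.surjective)
    Function.surjective_id hi hk Function.injective_id

end IsShortExact

/-- `Ext^i_R(X, K) = 0` for all `i > 0`. -/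
def IsExtAcyclic (R : Type u) [CommRing R] (K X : Type u) [AddCommGroup K] [Module R K]
    [AddCommGroup X] [Module R X] : Prop :=
  ∀ i : ℕ, Subsingleton (ModExt R (i + 1) X K)

section GKDimZero

variable {R : Type u} [CommRing R] {K L M N : Type u} [AddCommGroup K] [Module R K]
  [AddCommGroup L] [Module R L] [AddCommGroup M] [Module R M] [AddCommGroup N] [Module R N]

lemma isExtAcyclic_iff_extM {X : Type u} [AddCommGroup X] [Module R X] :
    IsExtAcyclic R K X ↔ ∀ i : ℕ, 0 < i → Subsingleton (extM R i X K) := by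
  refine ⟨fun h i hi ↦ ?_, fun h i ↦ ModExt.subsingleton_extM_iff.1 (h _ i.succ_pos)⟩
  obtain ⟨j, rfl⟩ := Nat.exists_eq_succ_of_ne_zero hi.ne'
  exact ModExt.subsingleton_extM_iff.2 (h j)

lemma IsExtAcyclic.of_equiv (h : IsExtAcyclic R K M) (e : M ≃ₗ[R] N) : IsExtAcyclic R K N :=
  fun i ↦ (ModExt.congrLeft (i + 1) K e).toEquiv.subsingleton_congr.2 (h i)

lemma IsExtAcyclic.of_projective [Module.Projective R M] : IsExtAcyclic R K M :=
  fun i ↦ ModExt.subsingleton_of_projective i M K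

lemma lcomp_lcomp_comp_evalK (f : M →ₗ[R] N) :
    (f.lcomp R K).lcomp R K ∘ₗ evalK R K M = evalK R K N ∘ₗ f := rfl

lemma isGKDimZero_iff : IsGKDimZero R K M ↔ Module.Finite R M ∧
    Function.Bijective (evalK R K M) ∧ IsExtAcyclic R K M ∧ IsExtAcyclic R K (M →ₗ[R] K) := by
  simp only [IsGKDimZero, isExtAcyclic_iff_extM]

namespace IsGKDimZero

lemma finite (h : IsGKDimZero R K M) : Module.Finite R M := h.1

lemma evalK_bijective (h : IsGKDimZero R K M) : Function.Bijective (evalK R K M) := h.2.1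

lemma isExtAcyclic (h : IsGKDimZero R K M) : IsExtAcyclic R K M := (isGKDimZero_iff.1 h).2.2.1

lemma isExtAcyclic_dual (h : IsGKDimZero R K M) : IsExtAcyclic R K (M →ₗ[R] K) :=
  (isGKDimZero_iff.1 h).2.2.2

lemma of_perfectPairing [Module.Finite R M] (b : M →ₗ[R] N →ₗ[R] K)
    (hb : Function.Bijective b) (hb' : Function.Bijective b.flip) (hM : IsExtAcyclic R K M)
    (hN : IsExtAcyclic R K N) : IsGKDimZero R K M := by
  let e : N ≃ₗ[R] (M →ₗ[R] K) := LinearEquiv.ofBijective b.flip hb'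
  have evalK_eq : evalK R K M = (LinearEquiv.congrLeft K R e).toLinearMap ∘ₗ b := by
    ext m φ
    obtain ⟨n, rfl⟩ := e.surjective φ
    simp [LinearEquiv.congrLeft, evalK, e]
  refine isGKDimZero_iff.2 ⟨inferInstance, ?_, hM, hN.of_equiv e⟩
  rw [evalK_eq]
  exact (LinearEquiv.congrLeft K R e).bijective.comp hb

lemma of_equiv (h : IsGKDimZero R K M) (e : M ≃ₗ[R] N) : IsGKDimZero R K N := by
  have := h.finite
  have : Module.Finite R N := Module.Finite.equiv e
  refine of_perfectPairing (evalK R K M ∘ₗ e.symm.toLinearMap)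
    (h.evalK_bijective.comp e.symm.bijective) ?_ (h.isExtAcyclic.of_equiv e) h.isExtAcyclic_dual
  exact (LinearEquiv.congrLeft K R e).bijective

lemma dual [IsNoetherianRing R] [Module.Finite R K] (h : IsGKDimZero R K M) :
    IsGKDimZero R K (M →ₗ[R] K) := by
  have := h.finite
  exact of_perfectPairing LinearMap.id Function.bijective_id h.evalK_bijective
    h.isExtAcyclic_dual h.isExtAcyclic

section ShortExact

variable {f : L →ₗ[R] M} {g : M →ₗ[R] N} (h : IsShortExact f g)

include h

lemma left [IsNoetherianRing R] (hM : IsGKDimZero R K M) (hN : IsGKDimZero R K N) :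
    IsGKDimZero R K L := by
  have := hM.finite
  have hd := h.dual (hN.isExtAcyclic 0)
  have surjective_bidual : Function.Surjective ((g.lcomp R K).lcomp R K) :=
    Function.Surjective.of_comp (g := evalK R K M)
      (hN.evalK_bijective.surjective.comp h.surjective)
  refine isGKDimZero_iff.2 ⟨Module.Finite.of_injective f h.injective, ?_, fun i ↦ ?_, fun i ↦ ?_⟩
  · exact LinearMap.bijective_of_bijective_of_injective_of_left_exact f g _ _ (evalK R K L)
      (evalK R K M) (evalK R K N) (lcomp_lcomp_comp_evalK f) (lcomp_lcomp_comp_evalK g) h.exact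
      (hd.lcomp_exact K) hM.evalK_bijective hN.evalK_bijective.injective h.injective
      (hd.lcomp_injective K)
  · exact h.subsingleton_ext_left_source (hM.isExtAcyclic i) (hN.isExtAcyclic (i + 1))
  · cases i with
    | zero =>
      exact hd.subsingleton_ext_one_of_lcomp_surjective (hM.isExtAcyclic_dual 0) surjective_bidual
    | succ i =>
      exact hd.subsingleton_ext_right_source (hN.isExtAcyclic_dual i)
        (hM.isExtAcyclic_dual (i + 1))

lemma middle (hL : IsGKDimZero R K L) (hN : IsGKDimZero R K N) : IsGKDimZero R K M := by
  have := hL.finite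
  have := hN.finite
  have hd := h.dual (hN.isExtAcyclic 0)
  refine isGKDimZero_iff.2 ⟨Module.Finite.of_exact h.exact h.surjective, ?_, fun i ↦ ?_,
    fun i ↦ ?_⟩
  · exact h.bijective_middle (hd.dual (hL.isExtAcyclic_dual 0)) (lcomp_lcomp_comp_evalK f)
      (lcomp_lcomp_comp_evalK g) hL.evalK_bijective hN.evalK_bijective
  · exact h.subsingleton_ext_middle_source (hL.isExtAcyclic i) (hN.isExtAcyclic i)
  · exact hd.subsingleton_ext_middle_source (hN.isExtAcyclic_dual i) (hL.isExtAcyclic_dual i)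

lemma right (hL : IsGKDimZero R K L) (hM : IsGKDimZero R K M)
    (hN : Subsingleton (ModExt R 1 N K)) : IsGKDimZero R K N := by
  have := hM.finite
  have hd := h.dual hN
  refine isGKDimZero_iff.2 ⟨Module.Finite.of_surjective g h.surjective, ?_, fun i ↦ ?_,
    fun i ↦ ?_⟩
  · exact LinearMap.bijective_of_surjective_of_bijective_of_right_exact f g _ _ (evalK R K L)
      (evalK R K M) (evalK R K N) (lcomp_lcomp_comp_evalK f) (lcomp_lcomp_comp_evalK g) h.exact
      (hd.lcomp_exact K) hL.evalK_bijective.surjective hM.evalK_bijective h.surjective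
      (hd.lcomp_surjective (hL.isExtAcyclic_dual 0))
  · cases i with
    | zero => exact hN
    | succ i =>
      exact h.subsingleton_ext_right_source (hL.isExtAcyclic i) (hM.isExtAcyclic (i + 1))
  · exact hd.subsingleton_ext_left_source (hM.isExtAcyclic_dual i) (hL.isExtAcyclic_dual (i + 1))

end ShortExact

lemma of_subsingleton [Subsingleton M] : IsGKDimZero R K M := by
  have : Subsingleton (M →ₗ[R] K) := inferInstance
  exact isGKDimZero_iff.2 ⟨inferInstance,
    ⟨Function.injective_of_subsingleton _, fun z ↦ ⟨0, Subsingleton.elim _ _⟩⟩,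
    .of_projective, .of_projective⟩

lemma pi_fin (h : IsGKDimZero R K M) (n : ℕ) : IsGKDimZero R K (Fin n → M) := by
  induction n with
  | zero => exact of_subsingleton
  | succ n ih => exact (middle .inl_snd h ih).of_equiv (Fin.consLinearEquiv R fun _ ↦ M)

end IsGKDimZero

namespace IsSemidualizing

lemma isExtAcyclic (hK : IsSemidualizing R K) : IsExtAcyclic R K K :=
  isExtAcyclic_iff_extM.2 hK.2.2

lemma isGKDimZero_ring (hK : IsSemidualizing R K) : IsGKDimZero R K R :=
  .of_perfectPairing (LinearMap.lsmul R K) hK.2.1 (LinearMap.ringLmapEquivSelf R R K).symm.bijective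
    .of_projective hK.isExtAcyclic

lemma isGKDimZero_free (hK : IsSemidualizing R K) (n : ℕ) : IsGKDimZero R K (Fin n → R) :=
  hK.isGKDimZero_ring.pi_fin n

end IsSemidualizing

end GKDimZero

namespace GKDimLE

variable {R : Type u} [CommRing R] {K L M N : Type u} [AddCommGroup K] [Module R K]
  [AddCommGroup L] [Module R L] [AddCommGroup M] [Module R M] [AddCommGroup N] [Module R N]
  {f : L →ₗ[R] M} {g : M →ₗ[R] N} {n : ℕ}

lemma of_equiv (h : GKDimLE R K n (.of R M)) (e : M ≃ₗ[R] N) : GKDimLE R K n (.of R N) := by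
  cases n with
  | zero => exact IsGKDimZero.of_equiv h e
  | succ n =>
    obtain ⟨G, p, hG, hp, hker⟩ := h
    refine ⟨G, e.toLinearMap ∘ₗ p, hG, e.surjective.comp hp, ?_⟩
    rwa [LinearEquiv.ker_comp]

lemma of_isShortExact (h : IsShortExact f g) (hM : IsGKDimZero R K M)
    (hL : GKDimLE R K n (.of R L)) : GKDimLE R K (n + 1) (.of R N) :=
  ⟨.of R M, g, hM, h.surjective, hL.of_equiv h.kerEquiv⟩

lemma finite (h : GKDimLE R K n (.of R M)) : Module.Finite R M := by
  cases n with
  | zero => exact h.1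
  | succ n =>
    obtain ⟨G, p, hG, hp, -⟩ := h
    have := hG.finite
    exact Module.Finite.of_surjective p hp

lemma succ (h : GKDimLE R K n (.of R M)) : GKDimLE R K (n + 1) (.of R M) := by
  induction n generalizing M with
  | zero =>
    have hid := IsShortExact.ker_subtype (g := (LinearMap.id : M →ₗ[R] M)) Function.surjective_id
    have : Subsingleton (LinearMap.ker (LinearMap.id : M →ₗ[R] M)) := by
      rw [LinearMap.ker_id]
      infer_instance
    exact of_isShortExact hid h (IsGKDimZero.of_subsingleton : IsGKDimZero R K _)
  | succ n ih =>
    obtain ⟨G, p, hG, hp, hker⟩ := h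
    exact ⟨G, p, hG, hp, ih hker⟩

lemma mono {m : ℕ} (hnm : n ≤ m) (h : GKDimLE R K n (.of R M)) : GKDimLE R K m (.of R M) :=
  Nat.le_induction h (fun _ _ ↦ succ) m hnm

lemma of_isGKDimZero (h : IsGKDimZero R K M) : GKDimLE R K n (.of R M) :=
  mono n.zero_le (n := 0) h

lemma subsingleton_ext (h : GKDimLE R K n (.of R M)) {i : ℕ} (hi : n < i) :
    Subsingleton (ModExt R i M K) := by
  obtain ⟨j, rfl⟩ := Nat.exists_eq_succ_of_ne_zero hi.ne_bot
  induction n generalizing M j with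
  | zero => exact IsGKDimZero.isExtAcyclic h j
  | succ n ih =>
    obtain ⟨G, p, hG, hp, hker⟩ := h
    obtain ⟨j, rfl⟩ := Nat.exists_eq_succ_of_ne_zero (Nat.lt_of_succ_lt_succ hi).ne_bot
    exact (IsShortExact.ker_subtype hp).subsingleton_ext_right_source
      (ih hker j (Nat.lt_of_succ_lt_succ hi)) (hG.isExtAcyclic _)

lemma of_succ (h : GKDimLE R K (n + 1) (.of R M)) (hM : Subsingleton (ModExt R (n + 1) M K)) :
    GKDimLE R K n (.of R M) := by
  induction n generalizing M with
  | zero =>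
    obtain ⟨G, p, hG, hp, hker⟩ := h
    exact IsGKDimZero.right (.ker_subtype hp) hker hG hM
  | succ n ih =>
    obtain ⟨G, p, hG, hp, hker⟩ := h
    exact ⟨G, p, hG, hp,
      ih hker ((IsShortExact.ker_subtype hp).subsingleton_ext_left_source (hG.isExtAcyclic n) hM)⟩

variable [IsNoetherianRing R]

lemma left_of_isGKDimZero_right (h : IsShortExact f g) (hM : GKDimLE R K n (.of R M))
    (hN : IsGKDimZero R K N) : GKDimLE R K n (.of R L) := by
  cases n with
  | zero => exact IsGKDimZero.left h hM hN
  | succ n =>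
    obtain ⟨G, p, hG, hp, hker⟩ := hM
    have hcomp : IsGKDimZero R K (LinearMap.ker (g ∘ₗ p)) :=
      .left (.ker_subtype (h.surjective.comp hp)) hG hN
    exact (of_isShortExact (IsShortExact.ker_comp hp g) hcomp hker).of_equiv h.kerEquiv.symm

variable (R K) in
/-- The modules of `G_K`-dimension at most `n` are closed under extensions; the induction over `n`
that proves this for every `n` also needs the closure properties deduced from it. -/
def ExtensionClosed (n : ℕ) : Prop :=
  ∀ {L M N : Type u} [AddCommGroup L] [Module R L] [AddCommGroup M] [Module R M] [AddCommGroup N]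
    [Module R N] {f : L →ₗ[R] M} {g : M →ₗ[R] N}, IsShortExact f g →
    GKDimLE R K n (.of R L) → GKDimLE R K n (.of R N) → GKDimLE R K n (.of R M)

lemma ExtensionClosed.left_of_isGKDimZero_middle (hn : ExtensionClosed R K n)
    (h : IsShortExact f g) (hM : IsGKDimZero R K M) (hN : GKDimLE R K (n + 1) (.of R N)) :
    GKDimLE R K n (.of R L) := by
  obtain ⟨G, p, hG, hp, hker⟩ := hN
  have hfiber : GKDimLE R K n (.of R (fiberProduct g p)) :=
    hn ((IsShortExact.ker_subtype hp).fiberProduct_fst g) hker (of_isGKDimZero hM)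
  exact left_of_isGKDimZero_right (h.fiberProduct_snd p) hfiber hG

lemma ExtensionClosed.left (hK : IsSemidualizing R K) (hn : ExtensionClosed R K n)
    (h : IsShortExact f g) (hM : GKDimLE R K n (.of R M)) (hN : GKDimLE R K (n + 1) (.of R N)) :
    GKDimLE R K n (.of R L) := by
  have := hN.finite
  obtain ⟨a, Z, _, _, i, p, hp⟩ := exists_isShortExact_free R N
  have hZ := hn.left_of_isGKDimZero_middle hp (hK.isGKDimZero_free a) hN
  exact left_of_isGKDimZero_right (h.fiberProduct_snd p) (hn (hp.fiberProduct_fst g) hZ hM)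
    (hK.isGKDimZero_free a)

lemma extensionClosed (hK : IsSemidualizing R K) (n : ℕ) : ExtensionClosed R K n := by
  intro L M N _ _ _ _ _ _ f g h hL hN
  induction n generalizing L M N with
  | zero => exact IsGKDimZero.middle h hL hN
  | succ n ih =>
    have closed : ExtensionClosed R K n := ih
    have := hL.finite
    have := hN.finite
    have : Module.Finite R M := .of_exact h.exact h.surjective
    obtain ⟨a, Z, _, _, i, p, hp⟩ := exists_isShortExact_free R M
    have hF := hK.isGKDimZero_free a
    have hcomp : GKDimLE R K n (.of R (LinearMap.ker (g ∘ₗ p))) :=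
      closed.left_of_isGKDimZero_middle (.ker_subtype (h.surjective.comp hp.surjective)) hF hN
    have hker := closed.left hK (.ker_comp hp.surjective g) hcomp (hL.of_equiv h.kerEquiv)
    exact of_isShortExact (.ker_subtype hp.surjective) hF hker

lemma middle (hK : IsSemidualizing R K) (h : IsShortExact f g) (hL : GKDimLE R K n (.of R L))
    (hN : GKDimLE R K n (.of R N)) : GKDimLE R K n (.of R M) :=
  extensionClosed hK n h hL hN

lemma left (hK : IsSemidualizing R K) (h : IsShortExact f g) (hM : GKDimLE R K n (.of R M))
    (hN : GKDimLE R K (n + 1) (.of R N)) : GKDimLE R K n (.of R L) :=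
  ExtensionClosed.left hK (extensionClosed hK n) h hM hN

lemma right (hK : IsSemidualizing R K) (h : IsShortExact f g) (hL : GKDimLE R K n (.of R L))
    (hM : GKDimLE R K (n + 1) (.of R M)) : GKDimLE R K (n + 1) (.of R N) := by
  have := hM.finite
  obtain ⟨a, Z, _, _, i, p, hp⟩ := exists_isShortExact_free R M
  have hF := hK.isGKDimZero_free a
  have hker : GKDimLE R K n (.of R (LinearMap.ker p)) :=
    left hK (.ker_subtype hp.surjective) (of_isGKDimZero hF) hM
  have hcomp := middle hK (.ker_comp hp.surjective g) hker (hL.of_equiv h.kerEquiv)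
  exact of_isShortExact (.ker_subtype (g := g ∘ₗ p) (h.surjective.comp hp.surjective)) hF hcomp

lemma pi_fin (hK : IsSemidualizing R K) (h : GKDimLE R K n (.of R M)) (a : ℕ) :
    GKDimLE R K n (.of R (Fin a → M)) := by
  induction a with
  | zero => exact of_isGKDimZero .of_subsingleton
  | succ a ih => exact (middle hK .inl_snd h ih).of_equiv (Fin.consLinearEquiv R fun _ ↦ M)

end GKDimLE

/-- `Ext^i_R(X, Y) = 0` for all `i < n`. For `X = R ⧸ I` this says that the grade of `I` on `Y` is
at least `n`. -/
def ExtVanishesBelow (R : Type u) [CommRing R] (n : ℕ) (X Y : Type u) [AddCommGroup X]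
    [Module R X] [AddCommGroup Y] [Module R Y] : Prop :=
  ∀ i < n, Subsingleton (ModExt R i X Y)

lemma ExtVanishesBelow.mono {R : Type u} [CommRing R] {m n : ℕ} {X Y : Type u} [AddCommGroup X]
    [Module R X] [AddCommGroup Y] [Module R Y] (h : ExtVanishesBelow R n X Y) (hmn : m ≤ n) :
    ExtVanishesBelow R m X Y :=
  fun i hi ↦ h i (hi.trans_le hmn)

namespace IsShortExact

variable {R : Type u} [CommRing R] {L M N : Type u} [AddCommGroup L] [Module R L]
  [AddCommGroup M] [Module R M] [AddCommGroup N] [Module R N] {f : L →ₗ[R] M} {g : M →ₗ[R] N}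
  {n : ℕ} {X : Type u} [AddCommGroup X] [Module R X]

open ModExt

lemma connectingSource_bijective (h : IsShortExact f g) (_ : Subsingleton (ModExt R n M X))
    (_ : Subsingleton (ModExt R (n + 1) M X)) : Function.Bijective (h.connectingSource n X) := by
  refine ⟨(injective_iff_map_eq_zero _).2 fun x hx ↦ ?_,
    fun x ↦ (h.connectingSource_precomp_exact n X x).1 (Subsingleton.elim _ _)⟩
  obtain ⟨y, rfl⟩ := (h.precomp_connectingSource_exact n X x).1 hx
  rw [Subsingleton.elim y 0, map_zero]

lemma postcomp_injective (h : IsShortExact f g) (hN : ExtVanishesBelow R n X N) :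
    Function.Injective (postcomp n X f) := by
  refine (injective_iff_map_eq_zero _).2 fun x hx ↦ ?_
  cases n with
  | zero =>
    refine (homEquiv X L).injective (LinearMap.ext fun y ↦ h.injective ?_)
    have := LinearMap.congr_fun (homEquiv_postcomp f x) y
    simpa [hx] using this.symm
  | succ n =>
    obtain ⟨y, rfl⟩ := (h.connectingTarget_postcomp_exact n X x).1 hx
    have := hN n n.lt_succ_self
    rw [Subsingleton.elim y 0, map_zero]

lemma precomp_injective (h : IsShortExact f g) (hL : ExtVanishesBelow R n L X) :
    Function.Injective (precomp n X g) := by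
  refine (injective_iff_map_eq_zero _).2 fun x hx ↦ ?_
  cases n with
  | zero =>
    refine (homEquiv N X).injective (h.lcomp_injective X ?_)
    exact (homEquiv_precomp g x).symm.trans (by simp [hx])
  | succ n =>
    obtain ⟨y, rfl⟩ := (h.connectingSource_precomp_exact n X x).1 hx
    have := hL n n.lt_succ_self
    rw [Subsingleton.elim y 0, map_zero]

end IsShortExact

section Grade

variable {R : Type u} [CommRing R] {K M X : Type u} [AddCommGroup K] [Module R K]
  [AddCommGroup M] [Module R M] [AddCommGroup X] [Module R X] {n : ℕ}

open ModExt

lemma IsSemidualizing.postcomp_flip_bijective_pi (hK : IsSemidualizing R K) (n a : ℕ) (X : Type u)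
    [AddCommGroup X] [Module R X] :
    Function.Bijective (postcomp n X : ((Fin a → K) →ₗ[R] K) →ₗ[R] _).flip := by
  refine ⟨(injective_iff_map_eq_zero _).2 fun x hx ↦ ?_, fun φ ↦ ?_⟩
  · rw [← sum_postcomp_single_proj n x]
    refine Finset.sum_eq_zero fun k _ ↦ ?_
    rw [show postcomp n X (LinearMap.proj k) x = 0 from LinearMap.congr_fun hx (LinearMap.proj k),
      map_zero]
  · refine ⟨∑ k, postcomp n X (LinearMap.single R (fun _ ↦ K) k) (φ (LinearMap.proj k)), ?_⟩
    ext1 g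
    choose r hr using fun k ↦ hK.2.1.2 (g ∘ₗ LinearMap.single R (fun _ ↦ K) k)
    have hr' (k : Fin a) : g ∘ₗ LinearMap.single R (fun _ ↦ K) k = r k • LinearMap.id := (hr k).symm
    have g_eq : g = ∑ k, r k • LinearMap.proj k := LinearMap.pi_ext' fun k ↦ by
      rw [hr' k]
      ext x
      simp [Pi.single_apply]
    calc postcomp n X g (∑ k, postcomp n X (LinearMap.single R (fun _ ↦ K) k)
          (φ (LinearMap.proj k)))
        = ∑ k, r k • φ (LinearMap.proj k) := by
          simp only [map_sum, ← postcomp_comp, hr', map_smul, LinearMap.smul_apply, postcomp_id]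
      _ = φ g := by simp only [g_eq, map_sum, map_smul]

variable [IsNoetherianRing R]

lemma IsGKDimZero.exists_isShortExact_pi (hK : IsSemidualizing R K) (h : IsGKDimZero R K M) :
    ∃ (a : ℕ) (Y : Type u) (_ : AddCommGroup Y) (_ : Module R Y) (i : M →ₗ[R] (Fin a → K))
      (p : (Fin a → K) →ₗ[R] Y), IsShortExact i p ∧ IsGKDimZero R K Y := by
  have := hK.1
  have := h.finite
  obtain ⟨a, L, _, _, i, p, hp⟩ := exists_isShortExact_free R (M →ₗ[R] K)
  have hL := IsGKDimZero.left hp (hK.isGKDimZero_free a) h.dual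
  let e : (Fin a → K) ≃ₗ[R] ((Fin a → R) →ₗ[R] K) :=
    LinearEquiv.piCongrRight (fun _ ↦ (LinearMap.ringLmapEquivSelf R R K).symm) ≪≫ₗ
      LinearMap.lsum R (fun _ : Fin a ↦ R) R
  let biduality := LinearEquiv.ofBijective _ h.evalK_bijective
  refine ⟨a, L →ₗ[R] K, inferInstance, inferInstance,
    e.symm.toLinearMap ∘ₗ p.lcomp R K ∘ₗ evalK R K M, _,
    (hp.dual (h.dual.isExtAcyclic 0)).of_ladder_linearEquiv biduality.symm e.symm ?_, hL.dual⟩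
  ext1 φ
  exact congrArg (fun ψ ↦ e.symm (ψ ∘ₗ p)) (biduality.apply_symm_apply φ)

namespace ExtVanishesBelow

lemma of_isGKDimZero (hK : IsSemidualizing R K) (hX : ExtVanishesBelow R n X K)
    (h : IsGKDimZero R K M) : ExtVanishesBelow R n X M := by
  intro i hi
  induction i using Nat.strong_induction_on generalizing M with
  | _ i ih =>
    obtain ⟨a, Y, _, _, j, p, hs, hY⟩ := h.exists_isShortExact_pi hK
    have := subsingleton_pi_right a (hX i hi)
    exact (hs.postcomp_injective fun l hl ↦ ih l hl hY (hl.trans hi)).subsingleton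

lemma postcomp_flip_injective (hK : IsSemidualizing R K) (hX : ExtVanishesBelow R n X K)
    (h : IsGKDimZero R K M) : Function.Injective (postcomp n X : (M →ₗ[R] K) →ₗ[R] _).flip := by
  obtain ⟨a, Y, _, _, j, p, hs, hY⟩ := h.exists_isShortExact_pi hK
  refine (injective_iff_map_eq_zero _).2 fun x hx ↦ ?_
  refine hs.postcomp_injective (hX.of_isGKDimZero hK hY)
    ((hK.postcomp_flip_bijective_pi n a X).injective ?_)
  ext1 g
  rw [map_zero, map_zero]
  exact (postcomp_comp n j g x).symm.trans (LinearMap.congr_fun hx (g ∘ₗ j))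

lemma postcomp_flip_bijective (hK : IsSemidualizing R K) (hX : ExtVanishesBelow R n X K)
    (h : IsGKDimZero R K M) : Function.Bijective (postcomp n X : (M →ₗ[R] K) →ₗ[R] _).flip := by
  obtain ⟨a, Y, _, _, j, p, hs, hY⟩ := h.exists_isShortExact_pi hK
  have hd := hs.dual (hY.isExtAcyclic 0)
  exact LinearMap.bijective_of_bijective_of_injective_of_left_exact (postcomp n X j)
    (postcomp n X p) ((j.lcomp R K).lcomp R _) ((p.lcomp R K).lcomp R _) _ _ _
    (by ext x g; exact postcomp_comp n j g x) (by ext x g; exact postcomp_comp n p g x)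
    (hs.postcomp_exact n X) (hd.lcomp_exact _) (hK.postcomp_flip_bijective_pi n a X)
    (hX.postcomp_flip_injective hK hY) (hs.postcomp_injective (hX.of_isGKDimZero hK hY))
    (hd.lcomp_injective _)

end ExtVanishesBelow

lemma IsSemidualizing.subsingleton_of_subsingleton_hom (hK : IsSemidualizing R K)
    (h : Subsingleton (K →ₗ[R] M)) : Subsingleton M := by
  have := hK.1
  refine subsingleton_of_forall_eq 0 fun m ↦ ?_
  have : Subsingleton (K →ₗ[R] Submodule.span R {m}) :=
    subsingleton_of_forall_eq 0 fun f ↦ LinearMap.ext fun x ↦ Subtype.ext <|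
      LinearMap.congr_fun (Subsingleton.elim ((Submodule.span R {m}).subtype ∘ₗ f) 0) x
  obtain ⟨r, hr, regular⟩ := IsSMulRegular.subsingleton_linearMap_iff.1 this
  have r_eq : r = 0 := hK.2.1.1 <| LinearMap.ext fun x ↦ by
    simpa using Module.mem_annihilator.1 hr x
  have := @regular ⟨m, Submodule.mem_span_singleton_self m⟩ 0 (by simp [r_eq])
  exact congrArg Subtype.val this

lemma extVanishesBelow_ring_iff (hK : IsSemidualizing R K) :
    ExtVanishesBelow R n X R ↔ ExtVanishesBelow R n X K := by
  refine ⟨fun hX i hi ↦ ?_, fun hX ↦ hX.of_isGKDimZero hK hK.isGKDimZero_ring⟩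
  induction i using Nat.strong_induction_on with
  | _ i ih =>
    have hXi : ExtVanishesBelow R i X K := fun l hl ↦ ih l hl (hl.trans hi)
    have := hX i hi
    have := (hXi.postcomp_flip_bijective hK hK.isGKDimZero_ring).surjective.subsingleton
    exact hK.subsingleton_of_subsingleton_hom
      (LinearEquiv.congrLeft _ R (LinearMap.ringLmapEquivSelf R R K)).symm.subsingleton

end Grade

lemma exists_surjective_pi_quotient {R : Type*} [CommRing R] (c : Ideal R) (N : Type*)
    [AddCommGroup N] [Module R N] [Module.Finite R N] (hN : Module.IsTorsionBySet R N c) :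
    ∃ (a : ℕ) (p : (Fin a → R ⧸ c) →ₗ[R] N), Function.Surjective p := by
  let := hN.module
  have := Module.IsTorsionBySet.isScalarTower hN (S := R)
  have : Module.Finite (R ⧸ c) N := .of_restrictScalars_finite R _ _
  obtain ⟨a, p, hp⟩ := Module.Finite.exists_fin' (R ⧸ c) N
  exact ⟨a, p.restrictScalars R, hp⟩

lemma isTorsionBySet_of_injective {R M N : Type*} [CommRing R] [AddCommGroup M] [Module R M]
    [AddCommGroup N] [Module R N] {s : Set R} {f : M →ₗ[R] N} (hf : Function.Injective f)
    (hN : Module.IsTorsionBySet R N s) : Module.IsTorsionBySet R M s :=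
  fun x r ↦ hf ((map_smul f r.1 x).trans ((@hN (f x) r).trans (map_zero f).symm))

lemma isTorsionBySet_pi_quotient {R : Type*} [CommRing R] (ι : Type*) (c : Ideal R) :
    Module.IsTorsionBySet R (ι → R ⧸ c) c := by
  have hc : Module.IsTorsionBySet R (R ⧸ c) c :=
    (Module.isTorsionBySet_quotient_iff c c).2 fun x _ hr ↦ c.mul_mem_right x hr
  exact fun _ _ ↦ funext fun _ ↦ @hc _ _

lemma ExtVanishesBelow.of_isTorsionBySet {R : Type u} [CommRing R] [IsNoetherianRing R]
    {c : Ideal R} {n : ℕ} {K N : Type u} [AddCommGroup K] [Module R K] [AddCommGroup N]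
    [Module R N] [Module.Finite R N] (h : ExtVanishesBelow R n (R ⧸ c) K)
    (hN : Module.IsTorsionBySet R N c) : ExtVanishesBelow R n N K := by
  intro i hi
  induction i using Nat.strong_induction_on generalizing N with
  | _ i ih =>
    obtain ⟨a, p, hp⟩ := exists_surjective_pi_quotient c N hN
    have hker : Module.IsTorsionBySet R (LinearMap.ker p) c :=
      isTorsionBySet_of_injective (LinearMap.ker p).injective_subtype
        (isTorsionBySet_pi_quotient _ c)
    have := ModExt.subsingleton_pi_left a (h i hi)
    exact ((IsShortExact.ker_subtype hp).precomp_injective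
      fun l hl ↦ ih l hl hker (hl.trans hi)).subsingleton

/-- `D` is an `n`-th syzygy of `E` with respect to modules of `G_K`-dimension zero: there is an
exact sequence `0 → D → G_{n-1} → ⋯ → G_0 → E → 0` in which the `G_i` have `G_K`-dimension zero. -/
def IsGKSyzygy (R : Type u) [CommRing R] (K E : Type u) [AddCommGroup K] [Module R K]
    [AddCommGroup E] [Module R E] : ℕ → ModuleCat.{u} R → Prop
  | 0, D => Nonempty (D ≃ₗ[R] E)
  | n + 1, D => ∃ (G D' : ModuleCat.{u} R) (f : D →ₗ[R] G) (g : G →ₗ[R] D'),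
      IsShortExact f g ∧ IsGKDimZero R K G ∧ IsGKSyzygy R K E n D'

namespace IsGKSyzygy

variable {R : Type u} [CommRing R] {K E : Type u} [AddCommGroup K] [Module R K]
  [AddCommGroup E] [Module R E] {n j : ℕ} {D : ModuleCat.{u} R}

lemma of_equiv {E' : Type u} [AddCommGroup E'] [Module R E'] (h : IsGKSyzygy R K E n D)
    (e : E ≃ₗ[R] E') : IsGKSyzygy R K E' n D := by
  induction n generalizing D with
  | zero => exact h.map (·.trans e)
  | succ n ih =>
    obtain ⟨G, D', f, g, hfg, hG, hD'⟩ := h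
    exact ⟨G, D', f, g, hfg, hG, ih hD'⟩

lemma gkDimLE (h : IsGKSyzygy R K E n D) (hD : GKDimLE R K j D) :
    GKDimLE R K (n + j) (.of R E) := by
  induction n generalizing D j with
  | zero =>
    rw [zero_add]
    exact hD.of_equiv h.some
  | succ n ih =>
    obtain ⟨G, D', f, g, hfg, hG, hD'⟩ := h
    rw [Nat.succ_add_eq_add_succ]
    exact ih hD' (.of_isShortExact hfg hG hD)

lemma nonempty_ext_equiv (h : IsGKSyzygy R K E n D) (j : ℕ) :
    Nonempty (ModExt R (n + j + 1) E K ≃ₗ[R] ModExt R (j + 1) D K) := by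
  induction n generalizing D j with
  | zero =>
    rw [zero_add]
    exact ⟨ModExt.congrLeft _ K h.some⟩
  | succ n ih =>
    obtain ⟨G, D', f, g, hfg, hG, hD'⟩ := h
    obtain ⟨e⟩ := ih hD' (j + 1)
    have hδ := hfg.connectingSource_bijective (hG.isExtAcyclic j) (hG.isExtAcyclic (j + 1))
    rw [Nat.succ_add_eq_add_succ]
    exact ⟨e ≪≫ₗ (LinearEquiv.ofBijective _ hδ).symm⟩

end IsGKSyzygy

section Duality

variable {R : Type u} [CommRing R] {K X Y F : Type u} [AddCommGroup K] [Module R K]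
  [AddCommGroup X] [Module R X] [AddCommGroup Y] [Module R Y] [AddCommGroup F] [Module R F]
  {i : Y →ₗ[R] F} {p : F →ₗ[R] X} {n : ℕ}

/-- The dual of a resolution of `X` by modules of `G_K`-dimension zero is a coresolution of
`Ext^{n+1}_R(X, K)` as long as the lower `Ext` modules vanish. -/
lemma exists_isGKSyzygy_ext [IsNoetherianRing R] [Module.Finite R K] (h : IsShortExact i p)
    (hF : IsGKDimZero R K F) (hY : GKDimLE R K n (.of R Y))
    (hX : ∀ j < n, Subsingleton (ModExt R (j + 1) X K)) :
    ∃ (G D : ModuleCat.{u} R) (q : G →ₗ[R] Y) (s : (G →ₗ[R] K) →ₗ[R] D),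
      IsGKDimZero R K G ∧ Function.Surjective q ∧ Function.Surjective s ∧
      Function.Exact ((i ∘ₗ q).lcomp R K) s ∧ IsGKSyzygy R K (ModExt R (n + 1) X K) n D := by
  induction n generalizing X Y F with
  | zero =>
    exact ⟨.of R Y, .of R (ModExt R 1 X K), .id, h.homConnecting K, hY, Function.surjective_id,
      h.homConnecting_surjective K (hF.isExtAcyclic 0), h.lcomp_homConnecting_exact K,
      ⟨.refl R _⟩⟩
  | succ n ih =>
    obtain ⟨G, q, hG, hq, hker⟩ := hY
    have hq' := IsShortExact.ker_subtype hq
    have hδ (j : ℕ) := h.connectingSource_bijective (hF.isExtAcyclic j) (hF.isExtAcyclic (j + 1))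
    obtain ⟨G', D', q', s', hG', hq'_surj, hs', hexact, hD'⟩ := ih hq' hG hker fun j hj ↦
      have := hX (j + 1) (Nat.succ_lt_succ hj)
      (hδ j).injective.subsingleton
    let restriction := ((LinearMap.ker q).subtype ∘ₗ q').lcomp R K
    have hrestriction : Function.Exact ((i ∘ₗ q).lcomp R K) restriction :=
      ((h.lcomp_surjective (hX 0 n.succ_pos)).comp_exact_iff_exact).2 <|
        (LinearMap.lcomp_injective_of_surjective q' hq'_surj).comp_exact_iff_exact.2
          (hq'.lcomp_exact K)
    refine ⟨G, .of R (LinearMap.range restriction), q, restriction.rangeRestrict, hG, hq,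
      restriction.surjective_rangeRestrict,
      (LinearMap.range restriction).injective_subtype.comp_exact_iff_exact.1 hrestriction,
      .of R (G' →ₗ[R] K), D', (LinearMap.range restriction).subtype, s',
      ⟨Subtype.val_injective, hs', ?_⟩, hG'.dual, hD'.of_equiv (.ofBijective _ (hδ n))⟩
    rw [LinearMap.exact_iff, Submodule.range_subtype]
    exact LinearMap.exact_iff.1 hexact

/-- The module is recovered from the coresolution of `exists_isGKSyzygy_ext` by dualizing once
more, since `F` and `G` are `K`-reflexive. -/
lemma nonempty_equiv_ext_one {G D : Type u} [AddCommGroup G] [Module R G] [AddCommGroup D]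
    [Module R D] {d : G →ₗ[R] F} {s : (G →ₗ[R] K) →ₗ[R] D} (hdp : Function.Exact d p)
    (hp : Function.Surjective p) (h : IsShortExact (d.lcomp R K) s) (hF : IsGKDimZero R K F)
    (hG : IsGKDimZero R K G) : Nonempty (ModExt R 1 D K ≃ₗ[R] X) := by
  let δ := h.homConnecting K ∘ₗ evalK R K F
  have hδ : Function.Surjective δ :=
    (h.homConnecting_surjective K (hG.isExtAcyclic_dual 0)).comp hF.evalK_bijective.surjective
  have hdδ : Function.Exact d δ := fun x ↦ by
    refine (h.lcomp_homConnecting_exact K _).trans ?_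
    rw [← hG.evalK_bijective.surjective.range_comp]
    exact ⟨fun ⟨g, hg⟩ ↦ ⟨g, hF.evalK_bijective.injective hg⟩,
      fun ⟨g, hg⟩ ↦ ⟨g, congrArg (evalK R K F) hg⟩⟩
  exact ⟨(hdδ.linearEquivOfSurjective hδ).symm ≪≫ₗ hdp.linearEquivOfSurjective hp⟩

theorem GKDimLE.ext_duality [IsNoetherianRing R] [Module.Finite R K]
    (h : GKDimLE R K n (.of R X)) (hX : ExtVanishesBelow R n X K) :
    GKDimLE R K n (.of R (ModExt R n X K)) ∧
      Nonempty (ModExt R n (ModExt R n X K) K ≃ₗ[R] X) := by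
  cases n with
  | zero =>
    exact ⟨IsGKDimZero.of_equiv (IsGKDimZero.dual h) (ModExt.homEquiv X K).symm,
      ⟨ModExt.homEquiv _ K ≪≫ₗ (ModExt.homEquiv X K).congrLeft K R ≪≫ₗ
        (LinearEquiv.ofBijective _ h.evalK_bijective).symm⟩⟩
  | succ n =>
    obtain ⟨F, p, hF, hp, hker⟩ := h
    have hp' := IsShortExact.ker_subtype hp
    obtain ⟨G, D, q, s, hG, hq, hs, hexact, hD⟩ := exists_isGKSyzygy_ext hp' hF hker
      fun j hj ↦ hX (j + 1) (Nat.succ_lt_succ hj)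
    have := hX 0 n.succ_pos
    have : Subsingleton (X →ₗ[R] K) := (ModExt.homEquiv X K).symm.subsingleton
    have hinj : Function.Injective ((LinearMap.ker p).subtype.lcomp R K) :=
      (injective_iff_map_eq_zero _).2 fun φ hφ ↦ by
        obtain ⟨ψ, rfl⟩ := (hp'.lcomp_exact K φ).1 hφ
        rw [Subsingleton.elim ψ 0, map_zero]
    have hGD : IsShortExact (((LinearMap.ker p).subtype ∘ₗ q).lcomp R K) s :=
      ⟨(LinearMap.lcomp_injective_of_surjective (S := R) q hq).comp hinj, hs, hexact⟩
    obtain ⟨e⟩ := nonempty_equiv_ext_one (hq.comp_exact_iff_exact.2 hp'.exact) hp hGD hF hG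
    obtain ⟨e'⟩ := hD.nonempty_ext_equiv 0
    exact ⟨hD.gkDimLE (.of_isShortExact hGD hG.dual hF.dual), ⟨e' ≪≫ₗ e⟩⟩

end Duality

/-- A surjection `ε : P → M` together with an exact sequence
`0 → Hom(M, D) → Hom(P, D) → N → 0` whose first map is dual to `ε` and whose second map is `q`.
If `D = R` and `ε` is a projective cover, this means that `N ≅ λM`. -/
structure IsLinkSequence {R D P M N : Type*} [CommRing R] [AddCommGroup D] [Module R D]
    [AddCommGroup P] [Module R P] [AddCommGroup M] [Module R M] [AddCommGroup N] [Module R N]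
    (ε : P →ₗ[R] M) (q : (P →ₗ[R] D) →ₗ[R] N) : Prop where
  surjective : Function.Surjective ε
  isShortExact : IsShortExact (ε.lcomp R D) q

namespace IsLinkSequence

variable {R D P M N : Type*} [CommRing R] [AddCommGroup D] [Module R D]
  [AddCommGroup P] [Module R P] [AddCommGroup M] [Module R M] [AddCommGroup N] [Module R N]
  {ε : P →ₗ[R] M} {q : (P →ₗ[R] D) →ₗ[R] N}

lemma of_exact (hε : Function.Surjective ε) (hq : Function.Surjective q)
    (h : Function.Exact (ε.lcomp R D) q) : IsLinkSequence ε q :=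
  ⟨hε, LinearMap.lcomp_injective_of_surjective ε hε, hq, h⟩

lemma comp_equiv {P' N' : Type*} [AddCommGroup P'] [Module R P'] [AddCommGroup N'] [Module R N']
    (h : IsLinkSequence ε q) (e : P' ≃ₗ[R] P) (e' : N ≃ₗ[R] N') :
    IsLinkSequence (ε ∘ₗ e.toLinearMap)
      (e'.toLinearMap ∘ₗ q ∘ₗ e.symm.toLinearMap.lcomp R D) := by
  refine .of_exact (h.surjective.comp e.surjective)
    (e'.surjective.comp (h.isShortExact.surjective.comp fun φ ↦ ⟨φ ∘ₗ e.toLinearMap, ?_⟩)) ?_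
  · ext x
    simp
  · intro φ
    refine (e'.map_eq_zero_iff.trans (h.isShortExact.exact _)).trans (exists_congr fun ψ ↦ ?_)
    exact e.eq_comp_toLinearMap_symm _ _

/-- Along a surjection `R → A` the `R`-linear and the `A`-linear dual of an `A`-module agree. -/
lemma restrictScalars {A : Type*} (R : Type*) {P M N : Type*} [CommRing R] [CommRing A]
    [Algebra R A] [AddCommGroup P] [Module R P] [Module A P] [IsScalarTower R A P]
    [AddCommGroup M] [Module R M] [Module A M] [IsScalarTower R A M] [AddCommGroup N]
    [Module R N] [Module A N] [IsScalarTower R A N] {ε : P →ₗ[A] M} {q : (P →ₗ[A] A) →ₗ[A] N}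
    (h : IsLinkSequence ε q) (hA : Function.Surjective (algebraMap R A)) :
    ∃ q' : (P →ₗ[R] A) →ₗ[R] N, IsLinkSequence (ε.restrictScalars R) q' := by
  let extend : (P →ₗ[R] A) →ₗ[R] (P →ₗ[A] A) :=
    { toFun := LinearMap.extendScalarsOfSurjective hA
      map_add' := fun _ _ ↦ rfl
      map_smul' := fun _ _ ↦ rfl }
  refine ⟨q.restrictScalars R ∘ₗ extend, .of_exact h.surjective
    (h.isShortExact.surjective.comp fun φ ↦ ⟨φ.restrictScalars R, rfl⟩) fun φ ↦ ?_⟩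
  refine (h.isShortExact.exact (extend φ)).trans ⟨?_, ?_⟩
  · rintro ⟨ψ, hψ⟩
    exact ⟨ψ.restrictScalars R, congrArg (LinearMap.restrictScalars R) hψ⟩
  · rintro ⟨ψ, rfl⟩
    exact ⟨LinearMap.extendScalarsOfSurjective hA ψ, rfl⟩

lemma subsingleton (h : IsLinkSequence ε q) (_ : Subsingleton P) : Subsingleton N :=
  have : Subsingleton (P →ₗ[R] D) :=
    subsingleton_of_forall_eq 0 fun φ ↦ LinearMap.ext fun x ↦ by simp [Subsingleton.elim x 0]
  h.isShortExact.surjective.subsingleton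

lemma exists_hom_ne_zero (h : IsLinkSequence ε q) (hN : ¬ Subsingleton N) :
    ∃ f : N →ₗ[R] D, f ≠ 0 := by
  have := not_subsingleton_iff_nontrivial.1 hN
  obtain ⟨_, hne⟩ := exists_ne (0 : N)
  obtain ⟨φ, rfl⟩ := h.isShortExact.surjective ‹N›
  have hker : ∃ x ∈ LinearMap.ker ε, φ x ≠ 0 := by
    by_contra! hφ
    obtain ⟨ψ, hψ⟩ := ((IsShortExact.ker_subtype h.surjective).lcomp_exact D φ).1
      (LinearMap.ext fun x ↦ hφ x x.2)
    exact hne ((h.isShortExact.exact φ).2 ⟨ψ, hψ⟩)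
  obtain ⟨x, hx, hφx⟩ := hker
  let evalAt : ((P →ₗ[R] D) ⧸ LinearMap.range (ε.lcomp R D)) →ₗ[R] D :=
    Submodule.liftQ _ (LinearMap.applyₗ x) <| by
      rintro _ ⟨ψ, rfl⟩
      exact (congrArg ψ hx).trans (map_zero ψ)
  let e := h.isShortExact.exact.linearEquivOfSurjective h.isShortExact.surjective
  refine ⟨evalAt ∘ₗ e.symm.toLinearMap, fun h0 ↦ hφx ?_⟩
  have := LinearMap.congr_fun h0 (e (Submodule.Quotient.mk φ))
  rwa [LinearMap.comp_apply, LinearEquiv.coe_coe, e.symm_apply_apply] at this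

end IsLinkSequence

namespace MinRes

variable {A M : Type u} [CommRing A] [AddCommGroup M] [Module A M]

lemma isLinkSequence (F : MinRes A M) :
    IsLinkSequence (N := F.lambdaMod) F.ε (F.d 0).dualMap.rangeRestrict :=
  .of_exact F.surj (LinearMap.surjective_rangeRestrict _) fun φ ↦ Subtype.ext_iff.trans <|
    LinearMap.exact_lcomp_of_exact_of_surjective A
      (LinearMap.exact_iff.2 F.exact0.symm) F.surj φ

lemma subsingleton_zero (F : MinRes A M) (_ : Subsingleton M) : Subsingleton (F.P 0) := by
  have hker : LinearMap.ker F.ε = ⊤ := (Submodule.eq_top_iff').2 fun _ ↦ Subsingleton.elim _ _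
  have htop := F.min_eps ⊥ (by rw [bot_sup_eq, hker])
  exact (Submodule.subsingleton_iff A).1 (subsingleton_of_bot_eq_top htop)

lemma exists_linearEquiv_pi [IsLocalRing A] (F : MinRes A M) (i : ℕ) :
    ∃ a : ℕ, Nonempty ((Fin a → A) ≃ₗ[A] F.P i) := by
  have := F.projective i
  have := F.finite i
  have : Module.Free A (F.P i) := Module.free_of_flat_of_isLocalRing
  exact ⟨_, ⟨(Module.finBasis A (F.P i)).equivFun.symm⟩⟩

end MinRes

/-- `N` is the module `λM` computed over `R ⧸ c` from a finite free cover of `M`. That such a cover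
is minimal is only remembered through its consequence for `M = 0`. -/
structure IsLambdaOver {R : Type u} [CommRing R] (c : Ideal R) (M N : Type u) [AddCommGroup M]
    [Module R M] [AddCommGroup N] [Module R N] : Prop where
  exists_isLinkSequence : ∃ (a : ℕ) (ε : (Fin a → R ⧸ c) →ₗ[R] M)
    (q : ((Fin a → R ⧸ c) →ₗ[R] R ⧸ c) →ₗ[R] N), IsLinkSequence ε q
  subsingleton : Subsingleton M → Subsingleton N

namespace IsLambdaOver

variable {R : Type u} [CommRing R] {c : Ideal R} {M N : Type u} [AddCommGroup M] [Module R M]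
  [AddCommGroup N] [Module R N]

lemma of_minRes [IsLocalRing R] [Module (R ⧸ c) M] [IsScalarTower R (R ⧸ c) M]
    [Module (R ⧸ c) N] [IsScalarTower R (R ⧸ c) N] (hc : c ≠ ⊤) (F : MinRes (R ⧸ c) M)
    (e : F.lambdaMod ≃ₗ[R ⧸ c] N) : IsLambdaOver c M N := by
  have : Nontrivial (R ⧸ c) := Ideal.Quotient.nontrivial_iff.2 hc
  have : IsLocalRing (R ⧸ c) :=
    .of_surjective' (Ideal.Quotient.mk c) Ideal.Quotient.mk_surjective
  obtain ⟨a, ⟨e₀⟩⟩ := F.exists_linearEquiv_pi 0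
  have hlink := F.isLinkSequence.comp_equiv e₀ e
  obtain ⟨q, hq⟩ := hlink.restrictScalars R Ideal.Quotient.mk_surjective
  exact ⟨⟨a, _, q, hq⟩, fun hM ↦
    have := F.subsingleton_zero hM
    hlink.subsingleton e₀.toEquiv.subsingleton⟩

lemma of_linkedBy [IsLocalRing R] (hc : c ≠ ⊤) (h : LinkedBy R c M N) :
    IsLambdaOver c M N ∧ IsLambdaOver c N M := by
  obtain ⟨hM, hN, h⟩ := h
  let := hM.module
  let := hN.module
  have : IsScalarTower R (R ⧸ c) M := hM.isScalarTower
  have : IsScalarTower R (R ⧸ c) N := hN.isScalarTower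
  obtain ⟨F, G, ⟨e⟩, ⟨e'⟩⟩ := h
  exact ⟨of_minRes hc F e, of_minRes hc G e'⟩

lemma isTorsionBySet (h : IsLambdaOver c M N) : Module.IsTorsionBySet R M c := by
  obtain ⟨a, ε, q, hq⟩ := h.exists_isLinkSequence
  intro x r
  obtain ⟨y, rfl⟩ := hq.surjective x
  exact (map_smul ε r.1 y).symm.trans
    ((congrArg ε (@isTorsionBySet_pi_quotient _ _ _ c y r)).trans (map_zero ε))

lemma exists_hom_ne_zero (h : IsLambdaOver c M N) (hN : ¬ Subsingleton N) :
    ∃ f : N →ₗ[R] R ⧸ c, f ≠ 0 :=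
  let ⟨_, _, _, hq⟩ := h.exists_isLinkSequence
  hq.exists_hom_ne_zero hN

end IsLambdaOver

lemma enat_sInf_eq_natCast {p : ℕ → Prop} {n : ℕ}
    (h : sInf {m : ℕ∞ | ∃ k : ℕ, m = k ∧ p k} = n) : p n ∧ ∀ i < n, ¬ p i := by
  have hne : {m : ℕ∞ | ∃ k : ℕ, m = k ∧ p k}.Nonempty := by
    refine Set.nonempty_iff_ne_empty.2 fun hempty ↦ ?_
    rw [hempty, sInf_empty] at h
    exact ENat.natCast_ne_top n h.symm
  have hmem := csInf_mem hne
  rw [h] at hmem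
  obtain ⟨k, hk, hp⟩ := hmem
  refine ⟨Nat.cast_injective hk ▸ hp, fun i hi hpi ↦ ?_⟩
  have hle : sInf {m : ℕ∞ | ∃ k : ℕ, m = k ∧ p k} ≤ i := sInf_le ⟨i, rfl, hpi⟩
  rw [h, Nat.cast_le] at hle
  exact hi.not_ge hle

/-- `η` generates `Ext^n_R(R/c, K)` and exhibits `c` as a `G_K`-Gorenstein ideal of grade `n`.
The last condition but one says that `r ↦ r • η` identifies `R/c` with `Ext^n_R(R/c, K)`. -/
structure IsGorensteinGenerator {R : Type u} [CommRing R] {K : Type u} [AddCommGroup K]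
    [Module R K] {c : Ideal R} {n : ℕ} (η : ModExt R n (R ⧸ c) K) : Prop where
  extVanishesBelow : ExtVanishesBelow R n (R ⧸ c) K
  gkDimLE : GKDimLE R K n (.of R (R ⧸ c))
  exists_smul_eq : ∀ x, ∃ r : R, r • η = x
  mem_of_smul_eq_zero : ∀ r : R, r • η = 0 → r ∈ c
  ne_top : c ≠ ⊤

section GorensteinIdeal

open ModExt

variable {R : Type u} [CommRing R] {K : Type u} [AddCommGroup K] [Module R K] {c : Ideal R} {n : ℕ}

/-- Multiplication by `r` kills `Ext^n_R(R/c, K)`, hence also its dual `R/c`. -/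
lemma GKDimLE.mem_of_smul_eq_zero [IsNoetherianRing R] [Module.Finite R K]
    (h : GKDimLE R K n (.of R (R ⧸ c))) (hc : ExtVanishesBelow R n (R ⧸ c) K)
    {η : ModExt R n (R ⧸ c) K} (hη : ∀ x, ∃ r : R, r • η = x) {r : R} (hr : r • η = 0) :
    r ∈ c := by
  obtain ⟨e⟩ := (h.ext_duality hc).2
  have smul_id_eq_zero : r • (LinearMap.id : ModExt R n (R ⧸ c) K →ₗ[R] _) = 0 := by
    ext1 y
    obtain ⟨s, rfl⟩ := hη y
    rw [LinearMap.smul_apply, LinearMap.id_apply, smul_comm, hr, smul_zero, LinearMap.zero_apply]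
  have smul_eq_zero (x : ModExt R n (ModExt R n (R ⧸ c) K) K) : r • x = 0 := by
    rw [← precomp_id n x, ← LinearMap.smul_apply, ← map_smul, smul_id_eq_zero, map_zero,
      LinearMap.zero_apply]
  refine Ideal.Quotient.eq_zero_iff_mem.1 ?_
  have := smul_eq_zero (e.symm 1)
  rwa [← map_smul, LinearEquiv.map_eq_zero_iff, Algebra.smul_def, mul_one] at this

lemma IsGKGorensteinIdeal.exists_isGorensteinGenerator [IsNoetherianRing R]
    (hK : IsSemidualizing R K) (h : IsGKGorensteinIdeal R K c) :
    ∃ (n : ℕ) (η : ModExt R n (R ⧸ c) K), IsGorensteinGenerator η := by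
  obtain ⟨n, hgrade, hdim, x, hx⟩ := h
  have := hK.1
  rw [grAnn, egrade, Ideal.annihilator_quotient] at hgrade
  obtain ⟨hne, hlt⟩ := enat_sInf_eq_natCast hgrade
  have hdim := (enat_sInf_eq_natCast hdim).1
  obtain ⟨e⟩ := nonempty_extM_linearEquiv (R := R) n (R ⧸ c) K
  have hvan : ExtVanishesBelow R n (R ⧸ c) K := (extVanishesBelow_ring_iff hK).1 fun i hi ↦
    subsingleton_extM_iff.1 (not_not.1 (hlt i hi))
  have hspan (y : ModExt R n (R ⧸ c) K) : ∃ r : R, r • e x = y := by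
    obtain ⟨r, hr⟩ := Submodule.mem_span_singleton.1 (hx ▸ Submodule.mem_top (x := e.symm y))
    exact ⟨r, by rw [← map_smul, hr, LinearEquiv.apply_symm_apply]⟩
  refine ⟨n, e x, hvan, hdim, hspan, fun r hr ↦ hdim.mem_of_smul_eq_zero hvan hspan hr, ?_⟩
  rintro rfl
  have : Subsingleton (R ⧸ (⊤ : Ideal R)) := Ideal.Quotient.subsingleton_iff.2 rfl
  exact hne (subsingleton_extM_iff.2 (subsingleton_of_subsingleton_left n))

namespace IsGorensteinGenerator

variable {η : ModExt R n (R ⧸ c) K} (hη : IsGorensteinGenerator η)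

include hη

lemma precomp_flip_bijective_quotient :
    Function.Bijective ((precomp n K : (R ⧸ c →ₗ[R] R ⧸ c) →ₗ[R] _).flip η) := by
  have eq_smul_id (f : (R ⧸ c) →ₗ[R] R ⧸ c) : ∃ r : R, r • LinearMap.id = f := by
    obtain ⟨r, hr⟩ := Ideal.Quotient.mk_surjective (f 1)
    refine ⟨r, ?_⟩
    ext
    simpa [Algebra.smul_def] using hr
  have apply_smul_id (r : R) : (precomp n K).flip η (r • LinearMap.id) = r • η := by
    rw [map_smul, LinearMap.flip_apply, precomp_id]
  refine ⟨(injective_iff_map_eq_zero _).2 fun f hf ↦ ?_, fun x ↦ ?_⟩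
  · obtain ⟨r, rfl⟩ := eq_smul_id f
    have hr := hη.mem_of_smul_eq_zero r ((apply_smul_id r).symm.trans hf)
    ext
    simpa [Algebra.smul_def] using Ideal.Quotient.eq_zero_iff_mem.2 hr
  · obtain ⟨r, rfl⟩ := hη.exists_smul_eq x
    exact ⟨_, apply_smul_id r⟩

lemma precomp_flip_bijective_pi (a : ℕ) :
    Function.Bijective ((precomp n K : ((Fin a → R ⧸ c) →ₗ[R] R ⧸ c) →ₗ[R] _).flip η) := by
  refine ⟨(injective_iff_map_eq_zero _).2 fun f hf ↦ LinearMap.pi_ext' fun k ↦ ?_, fun x ↦ ?_⟩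
  · refine hη.precomp_flip_bijective_quotient.injective ?_
    rw [LinearMap.zero_comp, map_zero]
    exact (precomp_comp n _ f η).trans ((congrArg _ hf).trans (map_zero _))
  · choose f hf using fun k ↦ hη.precomp_flip_bijective_quotient.surjective
      (precomp n K (LinearMap.single R (fun _ ↦ R ⧸ c) k) x)
    refine ⟨∑ k, f k ∘ₗ LinearMap.proj k, ?_⟩
    rw [map_sum, ← sum_precomp_proj_single n x]
    exact Finset.sum_congr rfl fun k _ ↦ (precomp_comp n _ (f k) η).trans (congrArg _ (hf k))

variable {M N : Type u} [AddCommGroup M] [Module R M] [AddCommGroup N] [Module R N]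

lemma precomp_flip_injective [Module.Finite R M] (hM : Module.IsTorsionBySet R M c) :
    Function.Injective ((precomp n K : (M →ₗ[R] R ⧸ c) →ₗ[R] _).flip η) := by
  obtain ⟨a, p, hp⟩ := exists_surjective_pi_quotient c M hM
  refine (injective_iff_map_eq_zero _).2 fun f hf ↦
    LinearMap.lcomp_injective_of_surjective (S := R) p hp
      ((hη.precomp_flip_bijective_pi a).injective ?_)
  rw [map_zero, map_zero]
  exact (precomp_comp n p f η).trans ((congrArg _ hf).trans (map_zero _))

variable [IsNoetherianRing R]

lemma precomp_flip_bijective [Module.Finite R M] (hM : Module.IsTorsionBySet R M c) :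
    Function.Bijective ((precomp n K : (M →ₗ[R] R ⧸ c) →ₗ[R] _).flip η) := by
  obtain ⟨a, p, hp⟩ := exists_surjective_pi_quotient c M hM
  have h := IsShortExact.ker_subtype hp
  have hker : Module.IsTorsionBySet R (LinearMap.ker p) c :=
    isTorsionBySet_of_injective h.injective (isTorsionBySet_pi_quotient _ c)
  exact LinearMap.bijective_of_bijective_of_injective_of_left_exact (p.lcomp R _)
    ((LinearMap.ker p).subtype.lcomp R _) (precomp n K p) (precomp n K (LinearMap.ker p).subtype)
    _ _ _ (by ext1 f; exact (precomp_comp n p f η).symm)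
    (by ext1 f; exact (precomp_comp n _ f η).symm) (h.lcomp_exact _) (h.precomp_exact n K)
    (hη.precomp_flip_bijective_pi a) (hη.precomp_flip_injective hker) (h.lcomp_injective _)
    (h.precomp_injective (hη.extVanishesBelow.of_isTorsionBySet hker))

lemma exists_isShortExact_precomp (h : IsLambdaOver c M N) :
    ∃ (a : ℕ) (ε : (Fin a → R ⧸ c) →ₗ[R] M) (q : ModExt R n (Fin a → R ⧸ c) K →ₗ[R] N),
      Function.Surjective ε ∧ IsShortExact (precomp n K ε) q := by
  obtain ⟨a, ε, q, hq⟩ := h.exists_isLinkSequence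
  have : Module.Finite R M := .of_surjective ε hq.surjective
  let comparison := LinearEquiv.ofBijective _ (hη.precomp_flip_bijective h.isTorsionBySet)
  let comparison_pi := LinearEquiv.ofBijective _ (hη.precomp_flip_bijective_pi a)
  refine ⟨a, ε, _, hq.surjective,
    hq.isShortExact.of_ladder_linearEquiv comparison comparison_pi ?_⟩
  ext1 f
  exact (precomp_comp n ε f η).symm

lemma gkDimLE_ext_pi (hK : IsSemidualizing R K) (a : ℕ) :
    GKDimLE R K n (.of R (ModExt R n (Fin a → R ⧸ c) K)) :=
  have := hK.1
  ((hη.gkDimLE.pi_fin hK a).ext_duality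
    (hη.extVanishesBelow.of_isTorsionBySet (isTorsionBySet_pi_quotient _ c))).1

/-- If `L` is the kernel of a free cover of `M` over `R/c`, then `N ≅ Ext^n_R(L, K)`. -/
lemma gkDimLE_of_isLambdaOver (hK : IsSemidualizing R K) (h : IsLambdaOver c M N)
    (hM : GKDimLE R K n (.of R M)) : GKDimLE R K n (.of R N) := by
  have := hK.1
  obtain ⟨a, ε, q, hε, hq⟩ := hη.exists_isShortExact_precomp h
  have hker := IsShortExact.ker_subtype hε
  have hL : GKDimLE R K n (.of R (LinearMap.ker ε)) :=
    .left hK hker (hη.gkDimLE.pi_fin hK a) hM.succ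
  have ext_duality := hL.ext_duality (hη.extVanishesBelow.of_isTorsionBySet
    (isTorsionBySet_of_injective hker.injective (isTorsionBySet_pi_quotient _ c)))
  have := hM.subsingleton_ext (Nat.lt_succ_self n)
  have hsurj : Function.Surjective (precomp n K (LinearMap.ker ε).subtype) := fun x ↦
    (hker.precomp_connectingSource_exact n K x).1 (Subsingleton.elim _ _)
  exact ext_duality.1.of_equiv (((hker.precomp_exact n K).linearEquivOfSurjective hsurj).symm ≪≫ₗ
    hq.exact.linearEquivOfSurjective hq.surjective)

lemma le_of_hom_ne_zero [Module.Finite R M] {c' : Ideal R} {n' : ℕ} {η' : ModExt R n' (R ⧸ c') K}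
    (hη' : IsGorensteinGenerator η') (hM : Module.IsTorsionBySet R M c)
    (hM' : Module.IsTorsionBySet R M c') {f : M →ₗ[R] R ⧸ c} (hf : f ≠ 0) : n' ≤ n := by
  by_contra! hlt
  have := hη'.extVanishesBelow.of_isTorsionBySet hM' n hlt
  exact hf (hη.precomp_flip_injective hM (Subsingleton.elim _ _))

end IsGorensteinGenerator

lemma GKDimLE.subsingleton {M : Type u} [AddCommGroup M] [Module R M] {m : ℕ}
    (h : GKDimLE R K m (.of R M)) (hM : ExtVanishesBelow R (m + 1) M K) : Subsingleton M := by
  induction m with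
  | zero =>
    have := hM 0 zero_lt_one
    have : Subsingleton (M →ₗ[R] K) := (homEquiv M K).symm.toEquiv.subsingleton
    exact ⟨fun _ _ ↦ (IsGKDimZero.evalK_bijective h).injective (Subsingleton.elim _ _)⟩
  | succ m ih => exact ih (h.of_succ (hM _ m.succ.lt_succ_self)) (hM.mono m.succ.le_succ)

/-- For `m > n` the module `Ext^n_R(M, K)` is a submodule of a module of `G_K`-dimension at most
`n` both with quotient `M₁` and with quotient `M₂`. -/
theorem GKDimLE.of_isLambdaOver [IsNoetherianRing R] {c₁ c₂ : Ideal R}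
    {η₁ : ModExt R n (R ⧸ c₁) K} {η₂ : ModExt R n (R ⧸ c₂) K} {M₁ M M₂ : Type u}
    [AddCommGroup M₁] [Module R M₁] [AddCommGroup M] [Module R M] [AddCommGroup M₂] [Module R M₂]
    (hK : IsSemidualizing R K) (hη₁ : IsGorensteinGenerator η₁) (hη₂ : IsGorensteinGenerator η₂)
    (h₁ : IsLambdaOver c₁ M₁ M) (h₁' : IsLambdaOver c₁ M M₁) (h₂ : IsLambdaOver c₂ M M₂) {m : ℕ}
    (hM₁ : GKDimLE R K m (.of R M₁)) : GKDimLE R K m (.of R M₂) := by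
  have := hM₁.finite
  by_cases hzero : Subsingleton M₁
  · have := h₂.subsingleton (h₁.subsingleton hzero)
    exact .of_isGKDimZero .of_subsingleton
  have hnm : n ≤ m := by
    by_contra! hlt
    exact hzero (hM₁.subsingleton
      ((hη₁.extVanishesBelow.of_isTorsionBySet h₁.isTorsionBySet).mono hlt))
  rcases hnm.eq_or_lt with rfl | hlt
  · exact hη₂.gkDimLE_of_isLambdaOver hK h₂ (hη₁.gkDimLE_of_isLambdaOver hK h₁ hM₁)
  · obtain ⟨m, rfl⟩ := Nat.exists_eq_succ_of_ne_zero hlt.ne_bot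
    obtain ⟨a₁, _, _, _, hq₁⟩ := hη₁.exists_isShortExact_precomp h₁'
    obtain ⟨a₂, _, _, _, hq₂⟩ := hη₂.exists_isShortExact_precomp h₂
    have hExt : GKDimLE R K m (.of R (ModExt R n M K)) :=
      .left hK hq₁ ((hη₁.gkDimLE_ext_pi hK a₁).mono (Nat.lt_succ_iff.1 hlt)) hM₁
    exact .right hK hq₂ hExt ((hη₂.gkDimLE_ext_pi hK a₂).mono hnm)

end GorensteinIdeal

section DegreeZero

open ModExt

variable {R : Type u} [CommRing R] {K : Type u} [AddCommGroup K] [Module R K]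
  {M N P : Type u} [AddCommGroup M] [Module R M] [AddCommGroup N] [Module R N]
  [AddCommGroup P] [Module R P]

/-- A free cover over `R/c` has `G_K`-dimension zero over `R` when `c` has grade zero, and dualizing
it into `K` is the same as dualizing it into `R/c`. -/
lemma IsGorensteinGenerator.exists_isLinkSequence [IsNoetherianRing R] {c : Ideal R}
    {η : ModExt R 0 (R ⧸ c) K} (hη : IsGorensteinGenerator η) (hK : IsSemidualizing R K)
    (h : IsLambdaOver c M N) :
    ∃ (P : Type u) (_ : AddCommGroup P) (_ : Module R P) (ε : P →ₗ[R] M)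
      (q : (P →ₗ[R] K) →ₗ[R] N), IsGKDimZero R K P ∧ IsLinkSequence ε q := by
  obtain ⟨a, ε, _, hε, hq⟩ := hη.exists_isShortExact_precomp h
  refine ⟨Fin a → R ⧸ c, inferInstance, inferInstance, ε, _, hη.gkDimLE.pi_fin hK a, hε,
    hq.of_ladder_linearEquiv (homEquiv M K) (homEquiv _ K) ?_⟩
  ext1 x
  exact (homEquiv_precomp ε x).symm

/-- The kernel `L` of `ε` satisfies `N ≅ Hom_R(L, K)`. -/
lemma IsLinkSequence.isGKDimZero [IsNoetherianRing R] [Module.Finite R K] {ε : P →ₗ[R] M}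
    {q : (P →ₗ[R] K) →ₗ[R] N} (h : IsLinkSequence ε q) (hP : IsGKDimZero R K P)
    (hM : IsGKDimZero R K M) : IsGKDimZero R K N := by
  have hker := IsShortExact.ker_subtype h.surjective
  have hdual := hker.dual (hM.isExtAcyclic 0)
  exact (IsGKDimZero.left hker hP hM).dual.of_equiv
    ((hdual.exact.linearEquivOfSurjective hdual.surjective).symm ≪≫ₗ
      h.isShortExact.exact.linearEquivOfSurjective h.isShortExact.surjective)

end DegreeZero

section Localization

open ModExt

variable {R : Type u} [CommRing R] (S : Submonoid R) {K : Type u} [AddCommGroup K] [Module R K]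
  {L M N P X : Type u} [AddCommGroup L] [Module R L] [AddCommGroup M] [Module R M]
  [AddCommGroup N] [Module R N] [AddCommGroup P] [Module R P] [AddCommGroup X] [Module R X]

lemma IsShortExact.localize {f : L →ₗ[R] M} {g : M →ₗ[R] N} (h : IsShortExact f g) :
    IsShortExact (LocalizedModule.map S f) (LocalizedModule.map S g) :=
  ⟨LocalizedModule.map_injective S f h.injective, LocalizedModule.map_surjective S g h.surjective,
    LocalizedModule.map_exact S f g h.exact⟩

/-- The localization of a linear equivalence. -/
noncomputable def localizedEquiv (e : M ≃ₗ[R] N) :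
    LocalizedModule S M ≃ₗ[Localization S] LocalizedModule S N :=
  .ofBijective (LocalizedModule.map S e.toLinearMap)
    ⟨LocalizedModule.map_injective S _ e.injective, LocalizedModule.map_surjective S _ e.surjective⟩

lemma localizedModule_hom_ext {T : Type*} [AddCommGroup T] [Module (Localization S) T]
    {f g : LocalizedModule S M →ₗ[Localization S] T}
    (h : ∀ m, f (LocalizedModule.mk m 1) = g (LocalizedModule.mk m 1)) : f = g := by
  ext x
  induction x using LocalizedModule.induction_on with
  | h m s =>
    have mk_eq : LocalizedModule.mk m s =
        (Localization.mk 1 s : Localization S) • LocalizedModule.mk m (1 : S) := by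
      rw [LocalizedModule.mk_smul_mk, one_smul, mul_one]
    rw [mk_eq, map_smul, map_smul, h]

variable [IsNoetherianRing R]

/-- For finite modules over a Noetherian ring, `Hom` commutes with localization. -/
noncomputable def localizedHomEquiv (X K : Type u) [AddCommGroup X] [Module R X]
    [Module.Finite R X] [AddCommGroup K] [Module R K] :
    LocalizedModule S (X →ₗ[R] K) ≃ₗ[Localization S]
      (LocalizedModule S X →ₗ[Localization S] LocalizedModule S K) :=
  have : Module.FinitePresentation R X := Module.finitePresentation_of_finite R X
  (IsLocalizedModule.linearEquiv S (LocalizedModule.mkLinearMap S (X →ₗ[R] K))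
    (LocalizedModule.map S (M := X) (N := K))).extendScalarsOfIsLocalization S (Localization S)

lemma localizedHomEquiv_mk [Module.Finite R X] (φ : X →ₗ[R] K) :
    localizedHomEquiv S X K (LocalizedModule.mk φ 1) = LocalizedModule.map S φ :=
  have : Module.FinitePresentation R X := Module.finitePresentation_of_finite R X
  IsLocalizedModule.linearEquiv_apply S (LocalizedModule.mkLinearMap S (X →ₗ[R] K))
    (LocalizedModule.map S (M := X) (N := K)) φ

lemma localizedHomEquiv_lcomp [Module.Finite R M] [Module.Finite R N] (f : M →ₗ[R] N) :
    (LocalizedModule.map S f).lcomp (Localization S) (LocalizedModule S K) ∘ₗ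
        (localizedHomEquiv S N K).toLinearMap =
      (localizedHomEquiv S M K).toLinearMap ∘ₗ LocalizedModule.map S (f.lcomp R K) := by
  refine localizedModule_hom_ext S fun φ ↦ localizedModule_hom_ext S fun m ↦ ?_
  simp only [LinearMap.comp_apply, LinearEquiv.coe_coe, LocalizedModule.map_mk,
    localizedHomEquiv_mk, LinearMap.lcomp_apply]

lemma IsExtAcyclic.localize [Module.Finite R X] (h : IsExtAcyclic R K X) :
    IsExtAcyclic (Localization S) (LocalizedModule S K) (LocalizedModule S X) := by
  intro i
  induction i generalizing X with
  | zero =>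
    obtain ⟨n, L, _, _, j, p, hs⟩ := exists_isShortExact_free R X
    have : Module.Finite R L := .of_injective j hs.injective
    refine (hs.localize S).subsingleton_ext_one_of_lcomp_surjective
      (subsingleton_of_projective 0 _ _) fun φ ↦ ?_
    obtain ⟨y, rfl⟩ := (localizedHomEquiv S L K).surjective φ
    obtain ⟨z, rfl⟩ := LocalizedModule.map_surjective S _ (hs.lcomp_surjective (h 0)) y
    exact ⟨localizedHomEquiv S _ K z, LinearMap.congr_fun (localizedHomEquiv_lcomp S j) z⟩
  | succ i ih =>
    obtain ⟨n, L, _, _, j, p, hs⟩ := exists_isShortExact_free R X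
    have : Module.Finite R L := .of_injective j hs.injective
    exact (hs.localize S).subsingleton_ext_right_source
      (ih fun l ↦ hs.subsingleton_ext_left_source (subsingleton_of_projective l _ _) (h (l + 1)))
      (subsingleton_of_projective (i + 1) _ _)

lemma IsGKDimZero.localize [Module.Finite R K] (h : IsGKDimZero R K X) :
    IsGKDimZero (Localization S) (LocalizedModule S K) (LocalizedModule S X) := by
  have := h.finite
  let biduality : LocalizedModule S X ≃ₗ[Localization S]
      (LocalizedModule S (X →ₗ[R] K) →ₗ[Localization S] LocalizedModule S K) :=
    localizedEquiv S (.ofBijective _ h.evalK_bijective) ≪≫ₗ localizedHomEquiv S (X →ₗ[R] K) K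
  have biduality_mk (x : X) :
      biduality (LocalizedModule.mk x 1) = LocalizedModule.map S (evalK R K X x) := by
    change localizedHomEquiv S (X →ₗ[R] K) K (LocalizedModule.map S _ (LocalizedModule.mk x 1)) = _
    rw [LocalizedModule.map_mk, localizedHomEquiv_mk]
    rfl
  have biduality_flip : biduality.toLinearMap.flip = (localizedHomEquiv S X K).toLinearMap := by
    refine localizedModule_hom_ext S fun φ ↦ localizedModule_hom_ext S fun x ↦ ?_
    rw [LinearMap.flip_apply, LinearEquiv.coe_coe, biduality_mk, LinearEquiv.coe_coe,
      localizedHomEquiv_mk, LocalizedModule.map_mk, LocalizedModule.map_mk]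
    rfl
  refine .of_perfectPairing (N := LocalizedModule S (X →ₗ[R] K)) biduality.toLinearMap
    biduality.bijective ?_ (h.isExtAcyclic.localize S) (h.isExtAcyclic_dual.localize S)
  rw [biduality_flip]
  exact (localizedHomEquiv S X K).bijective

lemma GKDimLE.localize [Module.Finite R K] {n : ℕ} (h : GKDimLE R K n (.of R X)) :
    GKDimLE (Localization S) (LocalizedModule S K) n
      (.of (Localization S) (LocalizedModule S X)) := by
  induction n generalizing X with
  | zero => exact IsGKDimZero.localize S h
  | succ n ih =>
    obtain ⟨G, p, hG, hp, hker⟩ := h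
    exact .of_isShortExact ((IsShortExact.ker_subtype hp).localize S)
      (IsGKDimZero.localize S hG) (ih hker)

lemma IsSemidualizing.localize (hK : IsSemidualizing R K) :
    IsSemidualizing (Localization S) (LocalizedModule S K) := by
  have := hK.1
  refine ⟨inferInstance, ?_, isExtAcyclic_iff_extM.1 (hK.isExtAcyclic.localize S)⟩
  let ringEquiv : LocalizedModule S R ≃ₗ[Localization S] Localization S :=
    (IsLocalizedModule.linearEquiv S (LocalizedModule.mkLinearMap S R)
      (Algebra.linearMap R (Localization S))).extendScalarsOfIsLocalization S (Localization S)
  have hR : IsGKDimZero (Localization S) (LocalizedModule S K) (Localization S) :=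
    (hK.isGKDimZero_ring.localize S).of_equiv ringEquiv
  let e := LinearMap.ringLmapEquivSelf (Localization S) (Localization S) (LocalizedModule S K)
  have lsmul_eq : LinearMap.lsmul (Localization S) (LocalizedModule S K) =
      e.symm.toLinearMap.lcomp (Localization S) (LocalizedModule S K) ∘ₗ
        evalK (Localization S) (LocalizedModule S K) (Localization S) := by
    ext x
    simp [e, evalK]
  rw [lsmul_eq]
  exact (LinearEquiv.congrLeft (LocalizedModule S K) (Localization S) e).bijective.comp
    hR.evalK_bijective

lemma IsLinkSequence.localize [Module.Finite R P] {ε : P →ₗ[R] M} {q : (P →ₗ[R] K) →ₗ[R] N}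
    (h : IsLinkSequence ε q) :
    ∃ q' : (LocalizedModule S P →ₗ[Localization S] LocalizedModule S K) →ₗ[Localization S]
      LocalizedModule S N, IsLinkSequence (LocalizedModule.map S ε) q' := by
  have : Module.Finite R M := .of_surjective ε h.surjective
  exact ⟨_, LocalizedModule.map_surjective S ε h.surjective,
    (h.isShortExact.localize S).of_ladder_linearEquiv (localizedHomEquiv S M K)
      (localizedHomEquiv S P K) (localizedHomEquiv_lcomp S ε)⟩

end Localization

section LocalRing

open ModExt IsLocalRing

variable {R : Type u} [CommRing R] {K L M N X : Type u} [AddCommGroup K] [Module R K]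
  [AddCommGroup L] [Module R L] [AddCommGroup M] [Module R M] [AddCommGroup N] [Module R N]
  [AddCommGroup X] [Module R X] {f : L →ₗ[R] M} {g : M →ₗ[R] N} {n : ℕ}

lemma ModExt.smul_eq_zero_of_mem_annihilator {i : ℕ} {r : R} (hr : r ∈ Module.annihilator R M)
    (x : ModExt R i M N) : r • x = 0 := by
  have smul_id_eq_zero : r • (LinearMap.id : M →ₗ[R] M) = 0 :=
    LinearMap.ext (Module.mem_annihilator.1 hr)
  calc r • x = precomp i N (r • LinearMap.id) x := by
        rw [map_smul, LinearMap.smul_apply, precomp_id]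
    _ = 0 := by rw [smul_id_eq_zero, map_zero, LinearMap.zero_apply]

lemma IsShortExact.extVanishesBelow_left (h : IsShortExact f g)
    (hM : ExtVanishesBelow R (n + 1) X M) (hN : ExtVanishesBelow R n X N) :
    ExtVanishesBelow R (n + 1) X L := by
  intro i hi
  cases i with
  | zero =>
    have := hM 0 hi
    exact (h.postcomp_injective fun j hj ↦ absurd hj j.not_lt_zero).subsingleton
  | succ i => exact h.subsingleton_ext_left_target (hM _ hi) (hN i (Nat.lt_of_succ_lt_succ hi))

lemma IsShortExact.extVanishesBelow_right (h : IsShortExact f g)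
    (hL : ExtVanishesBelow R (n + 1) X L) (hM : ExtVanishesBelow R n X M) :
    ExtVanishesBelow R n X N :=
  fun i hi ↦ h.subsingleton_ext_right_target (hL _ (Nat.succ_lt_succ hi)) (hM i hi)

lemma natCast_le_edepth_iff {I : Ideal R} :
    (n : ℕ∞) ≤ edepth R I M ↔ ExtVanishesBelow R n (R ⧸ I) M := by
  refine ⟨fun h i hi ↦ ?_, fun h ↦ le_sInf ?_⟩
  · by_contra hExt
    have hle : edepth R I M ≤ i := sInf_le ⟨i, rfl, subsingleton_extM_iff.not.2 hExt⟩
    exact hi.not_ge (Nat.cast_le.1 (h.trans hle))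
  · rintro _ ⟨i, rfl, hi⟩
    exact Nat.cast_le.2 (not_lt.1 fun hlt ↦ hi (subsingleton_extM_iff.2 (h i hlt)))

lemma min_le_edepth_iff {k : ℕ} {a : ℕ∞} {I : Ideal R} :
    min (k : ℕ∞) a ≤ edepth R I M ↔
      ∀ d : ℕ, d ≤ k → d ≤ a → ExtVanishesBelow R d (R ⧸ I) M := by
  refine ⟨fun h d hdk hda ↦ natCast_le_edepth_iff.1 <|
    (le_min (Nat.cast_le.2 hdk) hda).trans h, fun h ↦ ?_⟩
  obtain ⟨d, hd⟩ := ENat.ne_top_iff_exists.1 (min_lt_of_left_lt (ENat.natCast_lt_top k)).ne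
  rw [← hd, natCast_le_edepth_iff]
  exact h d (Nat.cast_le.1 (hd.trans_le (min_le_left _ _))) (hd.trans_le (min_le_right _ _))

lemma exists_linearMap_ne_zero_le_ker [IsLocalRing R] [Module.Finite R N] {U : Submodule R N}
    (hU : U ≠ ⊤) {v : M} (hv : v ≠ 0) (hv' : ∀ r ∈ maximalIdeal R, r • v = 0) :
    ∃ φ : N →ₗ[R] M, φ ≠ 0 ∧ U ≤ LinearMap.ker φ := by
  obtain ⟨W, hW, hUW⟩ := (eq_top_or_exists_le_coatom U).resolve_left hU
  obtain ⟨I, hI, ⟨e⟩⟩ := isSimpleModule_iff_quot_maximal.1 (isSimpleModule_iff_isCoatom.2 hW)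
  obtain rfl := eq_maximalIdeal hI
  let ψ : R ⧸ maximalIdeal R →ₗ[R] M :=
    Submodule.liftQ _ (LinearMap.toSpanSingleton R M v) fun r hr ↦ by simpa using hv' r hr
  have ψ_ne_zero : ψ ≠ 0 := fun h ↦ hv <|
    (one_smul R v).symm.trans (LinearMap.congr_fun h (Submodule.Quotient.mk 1))
  refine ⟨ψ ∘ₗ e.toLinearMap ∘ₗ W.mkQ, fun h ↦ ψ_ne_zero ?_, fun u hu ↦ ?_⟩
  · have hsurj : Function.Surjective (e.toLinearMap ∘ₗ W.mkQ) :=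
      e.surjective.comp W.mkQ_surjective
    exact (LinearMap.cancel_right hsurj).1 (h.trans (LinearMap.zero_comp _).symm)
  · have mkQ_eq_zero : W.mkQ u = 0 := by simpa using hUW hu
    simp [mkQ_eq_zero]

variable [IsNoetherianRing R] [IsLocalRing R]

/-- Were `Hom(M, K) → Hom(L, K)` not onto, its cokernel would have a nonzero map to
`Ext^d(R/𝔪, K)`. As `Hom(Hom(L, K), Ext^d(R/𝔪, K)) = Ext^d(R/𝔪, L)`, this would be a nonzero element
of `Ext^d(R/𝔪, L)` vanishing in `Ext^d(R/𝔪, M)`. -/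
lemma IsShortExact.lcomp_surjective_of_extVanishesBelow (h : IsShortExact f g)
    (hK : IsSemidualizing R K) (hL : IsGKDimZero R K L) (hM : IsGKDimZero R K M)
    (hdK : ExtVanishesBelow R n (R ⧸ maximalIdeal R) K)
    (hdK' : ¬ Subsingleton (ModExt R n (R ⧸ maximalIdeal R) K))
    (hdN : ExtVanishesBelow R n (R ⧸ maximalIdeal R) N) :
    Function.Surjective (f.lcomp R K) := by
  have := hK.1
  have := hL.finite
  have := not_subsingleton_iff_nontrivial.1 hdK'
  obtain ⟨v, hv⟩ := exists_ne (0 : ModExt R n (R ⧸ maximalIdeal R) K)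
  rw [← LinearMap.range_eq_top]
  by_contra hrange
  obtain ⟨φ, hφ, hle⟩ := exists_linearMap_ne_zero_le_ker hrange hv fun r hr ↦
    smul_eq_zero_of_mem_annihilator (by rwa [Ideal.annihilator_quotient]) v
  obtain ⟨ξ, rfl⟩ := (hdK.postcomp_flip_bijective hK hL).2 φ
  have postcomp_eq_zero : postcomp n _ f ξ = 0 := by
    refine (injective_iff_map_eq_zero _).1 (hdK.postcomp_flip_injective hK hM) _ ?_
    ext1 φ
    exact (postcomp_comp n f φ ξ).symm.trans (hle ⟨φ, rfl⟩)
  rw [(injective_iff_map_eq_zero _).1 (h.postcomp_injective hdN) ξ postcomp_eq_zero] at hφ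
  exact hφ (map_zero _)

/-- The Auslander–Bridger formula `G_K-dim X + depth X = depth R`, for `depth X ≥ depth R`. -/
lemma GKDimLE.isGKDimZero_of_extVanishesBelow {d : ℕ} (hX : GKDimLE R K n (.of R X))
    (hK : IsSemidualizing R K) (hd : ExtVanishesBelow R d (R ⧸ maximalIdeal R) R)
    (hd' : ¬ ExtVanishesBelow R (d + 1) (R ⧸ maximalIdeal R) R)
    (hdX : ExtVanishesBelow R d (R ⧸ maximalIdeal R) X) : IsGKDimZero R K X := by
  rw [extVanishesBelow_ring_iff hK] at hd hd'
  induction n generalizing X with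
  | zero => exact hX
  | succ n ih =>
    obtain ⟨G, p, hG, hp, hker⟩ := hX
    have hs := IsShortExact.ker_subtype hp
    have hker := ih hker <| by
      cases d with
      | zero => exact fun i hi ↦ absurd hi i.not_lt_zero
      | succ d => exact hs.extVanishesBelow_left (hd.of_isGKDimZero hK hG) (hdX.mono d.le_succ)
    have hd_ne : ¬ Subsingleton (ModExt R d (R ⧸ maximalIdeal R) K) := fun h ↦ hd' fun i hi ↦
      (Nat.lt_succ_iff_lt_or_eq.1 hi).elim (hd i) fun hid ↦ hid ▸ h
    exact .right hs hker hG <| hs.subsingleton_ext_one_of_lcomp_surjective (hG.isExtAcyclic 0)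
      (hs.lcomp_surjective_of_extVanishesBelow hK hker hG hd hd_ne hdX)

/-- If `depth R > d`, the bound `d` passes through the common submodule `Hom(M, K)` of the two
link sequences; if `depth R = d`, then `M₁`, and hence `M` and `M₂`, have `G_K`-dimension zero. -/
lemma IsLinkSequence.extVanishesBelow {P P₁ P₂ M₁ M₂ : Type u} [AddCommGroup P] [Module R P]
    [AddCommGroup P₁] [Module R P₁] [AddCommGroup P₂] [Module R P₂] [AddCommGroup M₁] [Module R M₁]
    [AddCommGroup M₂] [Module R M₂] {ε : P →ₗ[R] M₁} {q : (P →ₗ[R] K) →ₗ[R] M}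
    {ε₁ : P₁ →ₗ[R] M} {q₁ : (P₁ →ₗ[R] K) →ₗ[R] M₁} {ε₂ : P₂ →ₗ[R] M} {q₂ : (P₂ →ₗ[R] K) →ₗ[R] M₂}
    {d : ℕ} (h : IsLinkSequence ε q) (h₁ : IsLinkSequence ε₁ q₁) (h₂ : IsLinkSequence ε₂ q₂)
    (hK : IsSemidualizing R K) (hP : IsGKDimZero R K P) (hP₁ : IsGKDimZero R K P₁)
    (hP₂ : IsGKDimZero R K P₂) (hM₁ : GKDimLE R K n (.of R M₁))
    (hd : ExtVanishesBelow R d (R ⧸ maximalIdeal R) R)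
    (hdM₁ : ExtVanishesBelow R d (R ⧸ maximalIdeal R) M₁) :
    ExtVanishesBelow R d (R ⧸ maximalIdeal R) M₂ := by
  have := hK.1
  have hdK := (extVanishesBelow_ring_iff hK).1 hd
  by_cases hd' : ExtVanishesBelow R (d + 1) (R ⧸ maximalIdeal R) R
  · have hdK' := (extVanishesBelow_ring_iff hK).1 hd'
    exact h₂.isShortExact.extVanishesBelow_right
      (h₁.isShortExact.extVanishesBelow_left (hdK'.of_isGKDimZero hK hP₁.dual) hdM₁)
      (hdK.of_isGKDimZero hK hP₂.dual)
  · have hM₁ := hM₁.isGKDimZero_of_extVanishesBelow hK hd hd' hdM₁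
    exact hdK.of_isGKDimZero hK (h₂.isGKDimZero hP₂ (h.isGKDimZero hP hM₁))

end LocalRing

section Stilde

open ModExt IsLocalRing

variable {R : Type u} [CommRing R]

lemma stilde_iff {M : Type u} [AddCommGroup M] [Module R M] {k : ℕ} :
    Stilde R k M ↔ ∀ (p : Ideal R) (_ : p.IsPrime), ∀ d ≤ k,
      ExtVanishesBelow (Localization.AtPrime p) d
        (Localization.AtPrime p ⧸ maximalIdeal (Localization.AtPrime p)) (Localization.AtPrime p) →
      ExtVanishesBelow (Localization.AtPrime p) d
        (Localization.AtPrime p ⧸ maximalIdeal (Localization.AtPrime p))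
        (LocalizedModule p.primeCompl M) := by
  simp only [Stilde, locDepth, locRingDepth, rdepth, min_le_edepth_iff, natCast_le_edepth_iff]

lemma stilde_zero {M : Type u} [AddCommGroup M] [Module R M] : Stilde R 0 M := fun _ _ ↦ by simp

lemma stilde_of_subsingleton {M : Type u} [AddCommGroup M] [Module R M] [Subsingleton M] (k : ℕ) :
    Stilde R k M :=
  stilde_iff.2 fun _ _ _ _ _ i _ ↦ subsingleton_of_subsingleton_right i

variable [IsNoetherianRing R]

lemma Stilde.of_isLambdaOver_of_grade_zero {K M₁ M M₂ : Type u} [AddCommGroup K] [Module R K]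
    [AddCommGroup M₁] [Module R M₁] [AddCommGroup M] [Module R M] [AddCommGroup M₂] [Module R M₂]
    {c₁ c₂ : Ideal R} {η₁ : ModExt R 0 (R ⧸ c₁) K} {η₂ : ModExt R 0 (R ⧸ c₂) K} {k m : ℕ}
    (hS : Stilde R k M₁) (hK : IsSemidualizing R K) (hη₁ : IsGorensteinGenerator η₁)
    (hη₂ : IsGorensteinGenerator η₂) (h₁ : IsLambdaOver c₁ M₁ M) (h₁' : IsLambdaOver c₁ M M₁)
    (h₂ : IsLambdaOver c₂ M M₂) (hM₁ : GKDimLE R K m (.of R M₁)) : Stilde R k M₂ := by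
  rw [stilde_iff] at hS ⊢
  intro p hp d hdk hd
  have := hK.1
  obtain ⟨P, _, _, ε, q, hP, hε⟩ := hη₁.exists_isLinkSequence hK h₁
  obtain ⟨P₁, _, _, ε₁, q₁, hP₁, hε₁⟩ := hη₁.exists_isLinkSequence hK h₁'
  obtain ⟨P₂, _, _, ε₂, q₂, hP₂, hε₂⟩ := hη₂.exists_isLinkSequence hK h₂
  have := hP.finite
  have := hP₁.finite
  have := hP₂.finite
  obtain ⟨q', hq'⟩ := hε.localize p.primeCompl
  obtain ⟨q₁', hq₁'⟩ := hε₁.localize p.primeCompl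
  obtain ⟨q₂', hq₂'⟩ := hε₂.localize p.primeCompl
  exact IsLinkSequence.extVanishesBelow (R := Localization.AtPrime p) hq' hq₁' hq₂'
    (hK.localize p.primeCompl) (hP.localize p.primeCompl) (hP₁.localize p.primeCompl)
    (hP₂.localize p.primeCompl) (hM₁.localize p.primeCompl) hd (hS p hp d hdk hd)

/-- For `p` associated to `M`, `depth M_p = 0`, whereas `t ∈ p` makes `depth R_p` positive. -/
lemma Stilde.subsingleton_of_isSMulRegular {M : Type u} [AddCommGroup M] [Module R M] {k : ℕ}
    (hS : Stilde R (k + 1) M) {t : R} (ht : IsSMulRegular R t)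
    (htM : t ∈ Module.annihilator R M) : Subsingleton M := by
  by_contra hM
  have := not_subsingleton_iff_nontrivial.1 hM
  obtain ⟨p, hp⟩ := associatedPrimes.nonempty R M
  have := hp.isPrime
  have htp : t ∈ p := hp.annihilator_le (by rwa [Submodule.annihilator_top])
  have hom_ring : Subsingleton ((Localization.AtPrime p ⧸ maximalIdeal (Localization.AtPrime p))
      →ₗ[Localization.AtPrime p] Localization.AtPrime p) := by
    refine (ht.of_isLocalization (Localization.AtPrime p) p.primeCompl)
      |>.linearMap_subsingleton_of_mem_annihilator ?_
    rw [Ideal.annihilator_quotient]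
    exact (IsLocalization.AtPrime.to_map_mem_maximal_iff _ p t).2 htp
  have hExt := stilde_iff.1 hS p this 1 (Nat.succ_pos k) fun i hi ↦ by
    obtain rfl := Nat.lt_one_iff.1 hi
    exact (homEquiv _ _).toEquiv.subsingleton
  have := hExt 0 zero_lt_one
  obtain ⟨-, φ, hφ⟩ := (isAssociatedPrime_iff_exists_injective_linearMap _ _).1 <|
    Module.associatedPrimes.mem_associatedPrimes_atPrime_of_mem_associatedPrimes hp
  obtain rfl : φ = 0 := (homEquiv _ _).symm.injective (Subsingleton.elim _ _)
  exact zero_ne_one (hφ (by simp))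

end Stilde

section Main

open ModExt

variable {R : Type u} [CommRing R] {K M₁ M M₂ : Type u} [AddCommGroup K] [Module R K]
  [AddCommGroup M₁] [Module R M₁] [AddCommGroup M] [Module R M] [AddCommGroup M₂] [Module R M₂]

lemma gkDim_congr (h : ∀ m, GKDimLE R K m (.of R M₁) ↔ GKDimLE R K m (.of R M₂)) :
    GKDim R K M₁ = GKDim R K M₂ := by
  simp only [GKDim, h]

lemma exists_gkDimLE_of_gkDim_lt_top (h : GKDim R K M < ⊤) : ∃ m, GKDimLE R K m (.of R M) := by
  by_contra! hM
  refine h.ne (sInf_eq_top.2 ?_)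
  rintro _ ⟨m, rfl, hm⟩
  exact absurd hm (hM m)

variable [IsNoetherianRing R] {c₁ c₂ : Ideal R}

lemma IsGorensteinGenerator.grade_eq [Module.Finite R M] {n₁ n₂ : ℕ}
    {η₁ : ModExt R n₁ (R ⧸ c₁) K} {η₂ : ModExt R n₂ (R ⧸ c₂) K} (hη₁ : IsGorensteinGenerator η₁)
    (hη₂ : IsGorensteinGenerator η₂) (h₁ : IsLambdaOver c₁ M₁ M) (h₁' : IsLambdaOver c₁ M M₁)
    (h₂ : IsLambdaOver c₂ M M₂) (h₂' : IsLambdaOver c₂ M₂ M) (hM : ¬ Subsingleton M) :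
    n₁ = n₂ := by
  obtain ⟨f₁, hf₁⟩ := h₁.exists_hom_ne_zero hM
  obtain ⟨f₂, hf₂⟩ := h₂'.exists_hom_ne_zero hM
  exact le_antisymm (hη₂.le_of_hom_ne_zero hη₁ h₂.isTorsionBySet h₁'.isTorsionBySet hf₂)
    (hη₁.le_of_hom_ne_zero hη₂ h₁'.isTorsionBySet h₂.isTorsionBySet hf₁)

lemma IsGorensteinGenerator.exists_isSMulRegular_mem {n : ℕ} {η : ModExt R (n + 1) (R ⧸ c₁) K}
    (hη : IsGorensteinGenerator η) (hK : IsSemidualizing R K) : ∃ t ∈ c₁, IsSMulRegular R t := by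
  have := (extVanishesBelow_ring_iff hK).2 hη.extVanishesBelow 0 n.succ_pos
  have : Subsingleton (R ⧸ c₁ →ₗ[R] R) := (homEquiv (R ⧸ c₁) R).symm.toEquiv.subsingleton
  obtain ⟨t, ht, hreg⟩ := IsSMulRegular.subsingleton_linearMap_iff.1 this
  rw [Ideal.annihilator_quotient] at ht
  exact ⟨t, ht, hreg⟩

theorem Stilde.of_isLambdaOver {n : ℕ} {η₁ : ModExt R n (R ⧸ c₁) K} {η₂ : ModExt R n (R ⧸ c₂) K}
    {k m : ℕ} (hS : Stilde R k M₁) (hK : IsSemidualizing R K) (hη₁ : IsGorensteinGenerator η₁)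
    (hη₂ : IsGorensteinGenerator η₂) (h₁ : IsLambdaOver c₁ M₁ M) (h₁' : IsLambdaOver c₁ M M₁)
    (h₂ : IsLambdaOver c₂ M M₂) (hM₁ : GKDimLE R K m (.of R M₁)) : Stilde R k M₂ := by
  obtain _ | k := k
  · exact stilde_zero
  obtain _ | n := n
  · exact hS.of_isLambdaOver_of_grade_zero hK hη₁ hη₂ h₁ h₁' h₂ hM₁
  · obtain ⟨t, ht, hreg⟩ := hη₁.exists_isSMulRegular_mem hK
    have hM₁ : Subsingleton M₁ := hS.subsingleton_of_isSMulRegular hreg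
      (Module.mem_annihilator.2 fun x ↦ h₁.isTorsionBySet (a := ⟨t, ht⟩))
    have := h₂.subsingleton (h₁.subsingleton hM₁)
    exact stilde_of_subsingleton _

end Main

section Statements

variable (R : Type u) [CommRing R] [IsNoetherianRing R]

theorem stmt19 [IsLocalRing R] (K : Type u) [AddCommGroup K] [Module R K]
    (hK : IsSemidualizing R K)
    (c₁ c₂ : Ideal R) (hc₁ : IsGKGorensteinIdeal R K c₁) (hc₂ : IsGKGorensteinIdeal R K c₂)
    (M₁ M M₂ : Type u) [AddCommGroup M₁] [Module R M₁] [Module.Finite R M₁]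
    [AddCommGroup M] [Module R M] [Module.Finite R M]
    [AddCommGroup M₂] [Module R M₂] [Module.Finite R M₂]
    (l₁ : LinkedBy R c₁ M₁ M) (l₂ : LinkedBy R c₂ M M₂) :
    GKDim R K M₁ = GKDim R K M₂ ∧
    (GKDim R K M₁ < ⊤ → ∀ k : ℕ, (Stilde R k M₁ ↔ Stilde R k M₂)) := by
  obtain ⟨n₁, η₁, hη₁⟩ := hc₁.exists_isGorensteinGenerator hK
  obtain ⟨n₂, η₂, hη₂⟩ := hc₂.exists_isGorensteinGenerator hK
  obtain ⟨h₁, h₁'⟩ := IsLambdaOver.of_linkedBy hη₁.ne_top l₁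
  obtain ⟨h₂, h₂'⟩ := IsLambdaOver.of_linkedBy hη₂.ne_top l₂
  by_cases hM : Subsingleton M
  · have := h₁'.subsingleton hM
    have := h₂.subsingleton hM
    exact ⟨gkDim_congr fun m ↦ iff_of_true (.of_isGKDimZero .of_subsingleton)
      (.of_isGKDimZero .of_subsingleton),
      fun _ k ↦ iff_of_true (stilde_of_subsingleton k) (stilde_of_subsingleton k)⟩
  obtain rfl : n₁ = n₂ := hη₁.grade_eq hη₂ h₁ h₁' h₂ h₂' hM
  have gkDimLE_iff (m : ℕ) : GKDimLE R K m (.of R M₁) ↔ GKDimLE R K m (.of R M₂) :=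
    ⟨.of_isLambdaOver hK hη₁ hη₂ h₁ h₁' h₂, .of_isLambdaOver hK hη₂ hη₁ h₂' h₂ h₁'⟩
  refine ⟨gkDim_congr gkDimLE_iff, fun hfin k ↦ ?_⟩
  obtain ⟨m, hm⟩ := exists_gkDimLE_of_gkDim_lt_top hfin
  exact ⟨fun hS ↦ hS.of_isLambdaOver hK hη₁ hη₂ h₁ h₁' h₂ hm,
    fun hS ↦ hS.of_isLambdaOver hK hη₂ hη₁ h₂' h₂ h₁' ((gkDimLE_iff m).1 hm)⟩

end Statements
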